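/- Let 𝒫 = (P, μ, σ) be an n-dimensional system and let 𝔘_𝒫 = [min_{u ∈ ℳ^{exp,1}(P)} U_𝒫(u), U_𝒫(1_P)], where 1_P is the constant function 1 (the minimum is attained). Then for every U ∈ 𝔘_𝒫 there exists a unique equilibrium of internal μ-energy U, i.e. a unique u ∈ ℳ^{exp,1}(P) with U_𝒫(u) = U and S_𝒫(u) = sup{ S_𝒫(u') : u' ∈ ℳ^{exp,1}(P), U_𝒫(u') = U }. -/

import Mathlib

open MeasureTheory Filter Topology
open scoped ENNReal NNReal

noncomputable section

abbrev Euc (n : ℕ) := EuclideanSpace ℝ (Fin n)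

/-- A `[0,∞]`-valued function on a set `K ⊆ ℝⁿ` is convex if
`u((1−t)x+ty) ≤ (1−t)u(x)+t·u(y)` in `[0,∞]` for all `x, y ∈ K` and `t ∈ [0,1]`. -/
def ConvexFnOn {n : ℕ} (K : Set (Euc n)) (u : Euc n → ℝ≥0∞) : Prop :=
  ∀ ⦃x⦄, x ∈ K → ∀ ⦃y⦄, y ∈ K → ∀ ⦃t : ℝ⦄, 0 ≤ t → t ≤ 1 →
    u ((1 - t) • x + t • y) ≤ ENNReal.ofReal (1 - t) * u x + ENNReal.ofReal t * u y

/-- A polytope: a compact set with nonempty interior which is a finite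
intersection of closed half-spaces (cut out by nonzero affine functions). -/
def IsPolytope {n : ℕ} (P : Set (Euc n)) : Prop :=
  IsCompact P ∧ (interior P).Nonempty ∧
    ∃ (m : ℕ) (L : Fin m → (Euc n →ᵃ[ℝ] ℝ)),
      (∀ k, L k ≠ 0) ∧ P = ⋂ k, {x | 0 ≤ L k x}

/-- `F` is a face of `P`: the intersection of `P` with the zero locus of a
nonzero affine function that is nonnegative on `P`. -/
def IsFaceOf {n : ℕ} (P F : Set (Euc n)) : Prop :=
  ∃ ℓ : Euc n →ᵃ[ℝ] ℝ, ℓ ≠ 0 ∧ (∀ y ∈ P, 0 ≤ ℓ y) ∧ F = {y ∈ P | ℓ y = 0}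

/-- A facet: a face spanning an affine subspace of dimension `n − 1`. -/
def IsFacetOf {n : ℕ} (P F : Set (Euc n)) : Prop :=
  IsFaceOf P F ∧ Module.finrank ℝ (vectorSpan ℝ F) + 1 = n

/-- A simple polytope: every vertex lies on exactly `n` facets. -/
def IsSimplePolytope {n : ℕ} (P : Set (Euc n)) : Prop :=
  IsPolytope P ∧ ∀ v : Euc n, IsFaceOf P {v} →
    {F : Set (Euc n) | IsFacetOf P F ∧ v ∈ F}.ncard = n

/-- An `n`-dimensional system `𝒫 = (P, μ, σ)`: a simple polytope `P ⊆ ℝⁿ`, a flat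
measure `μ` on `P` (a positive constant multiple of Lebesgue measure restricted
to `P`), and a flat measure `σ` on `∂P` (supported on the boundary and, on each
facet, a positive constant multiple of `(n−1)`-dimensional Hausdorff measure). -/
structure NSystem (n : ℕ) where
  P : Set (Euc n)
  μ : Measure (Euc n)
  σ : Measure (Euc n)
  simple : IsSimplePolytope P
  flat : ∃ c : ℝ, 0 < c ∧ μ = ENNReal.ofReal c • volume.restrict P
  bdry_supp : σ (frontier P)ᶜ = 0
  flat_bdry : ∀ F : Set (Euc n), IsFacetOf P F →
    ∃ c : ℝ, 0 < c ∧ σ.restrict F =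
      ENNReal.ofReal c • (Measure.hausdorffMeasure ((n : ℝ) - 1)).restrict F

/-- `y log y`, computed via the real value of `y ∈ [0,∞]`. -/
def xlogx (y : ℝ≥0∞) : ℝ := y.toReal * Real.log y.toReal

/-- `∫_A u log u dμ ∈ (−∞, ∞]`, as an extended real number. -/
def entOn {n : ℕ} (μ : Measure (Euc n)) (A : Set (Euc n)) (u : Euc n → ℝ≥0∞) : EReal :=
  ((∫⁻ x in A, ENNReal.ofReal (xlogx (u x)) ∂μ : ℝ≥0∞) : EReal)
    - ((∫⁻ x in A, ENNReal.ofReal (-(xlogx (u x))) ∂μ : ℝ≥0∞) : EReal)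

/-- `u : P → (0,∞]` is log-convex: `u((1−t)x+ty) ≤ u(x)^{1−t} u(y)^t`. -/
def LogConvexOn {n : ℕ} (P : Set (Euc n)) (u : Euc n → ℝ≥0∞) : Prop :=
  ∀ ⦃x⦄, x ∈ P → ∀ ⦃y⦄, y ∈ P → ∀ ⦃t : ℝ⦄, 0 ≤ t → t ≤ 1 →
    u ((1 - t) • x + t • y) ≤ u x ^ (1 - t) * u y ^ t

/-- `ℳ^{exp,p}(P)`: lower semi-continuous log-convex `u : P → (0,∞]` with
`∫_P u dμ = μ(P)` and `∫_P u^p dμ < ∞`. -/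
def MExp {n : ℕ} (S : NSystem n) (p : ℝ) : Set (Euc n → ℝ≥0∞) :=
  {u | LowerSemicontinuousOn u S.P ∧ (∀ x ∈ S.P, 0 < u x) ∧ LogConvexOn S.P u ∧
    (∫⁻ x in S.P, u x ∂S.μ) = S.μ S.P ∧ (∫⁻ x in S.P, u x ^ p ∂S.μ) < ⊤}

/-- The nonequilibrium entropy `S_𝒫(u) = −(1/μ(P)) ∫_P u log u dμ ∈ [−∞, 0]`. -/
def Spf {n : ℕ} (S : NSystem n) (u : Euc n → ℝ≥0∞) : EReal :=
  (((S.μ S.P).toReal⁻¹ : ℝ) : EReal) *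
    (((∫⁻ x in S.P, ENNReal.ofReal (-(xlogx (u x))) ∂S.μ : ℝ≥0∞) : EReal)
      - ((∫⁻ x in S.P, ENNReal.ofReal (xlogx (u x)) ∂S.μ : ℝ≥0∞) : EReal))

/-- The internal μ-energy `U_𝒫(u) = (1/μ(P)) ∫_{∂P} u dσ ∈ (0, ∞]`. -/
def Upf {n : ℕ} (S : NSystem n) (u : Euc n → ℝ≥0∞) : ℝ≥0∞ :=
  (S.μ S.P)⁻¹ * ∫⁻ x in frontier S.P, u x ∂S.σ

/-- The free μ-energy `F_𝒫(T,u) = U_𝒫(u) − T·S_𝒫(u)` if `S_𝒫(u) > −∞`, else `∞`. -/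
def Fpf {n : ℕ} (S : NSystem n) (T : ℝ) (u : Euc n → ℝ≥0∞) : EReal :=
  if Spf S u = ⊥ then ⊤ else (Upf S u : EReal) - (T : EReal) * Spf S u

/-- `u` is the μ-canonical distribution of temperature `T ≥ 0`: for `T > 0` the
minimizer of `F_𝒫(T,·)` on `ℳ^{exp,1}(P)`; for `T = 0` the minimizer of `U_𝒫`
maximizing `S_𝒫` among all minimizers of `U_𝒫`. -/
def IsCanonical {n : ℕ} (S : NSystem n) (T : ℝ) (u : Euc n → ℝ≥0∞) : Prop :=
  u ∈ MExp S 1 ∧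
  (0 < T → ∀ u' ∈ MExp S 1, Fpf S T u ≤ Fpf S T u') ∧
  (T = 0 → (∀ u' ∈ MExp S 1, Upf S u ≤ Upf S u') ∧
    ∀ u' ∈ MExp S 1, (∀ u'' ∈ MExp S 1, Upf S u' ≤ Upf S u'') → Spf S u' ≤ Spf S u)


lemma seg_frontier {n : ℕ} {P : Set (Euc n)} (hP : IsClosed P) {x z : Euc n} (hx : x ∈ P) (hz : z ∉ P) :
    ∃ y ∈ segment ℝ x z, y ∈ frontier P := by
  by_contra hcon
  push Not at hcon
  have hpre : IsPreconnected (segment ℝ x z) := (convex_segment x z).isPreconnected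
  have h := hpre (interior P) Pᶜ isOpen_interior hP.isOpen_compl ?_ ⟨x, left_mem_segment ℝ x z, ?_⟩
    ⟨z, right_mem_segment ℝ x z, hz⟩
  · obtain ⟨w, _, hw1, hw2⟩ := h
    exact hw2 (interior_subset hw1)
  · intro y hy
    by_cases hyP : y ∈ P
    · left
      by_contra hn
      exact hcon y hy ((mem_frontier_iff_notMem_interior hyP).2 hn)
    · right; exact hyP
  · by_contra hn
    exact hcon x (left_mem_segment ℝ x z) ((mem_frontier_iff_notMem_interior hx).2 hn)

lemma aff_pos {n : ℕ} {P : Set (Euc n)} {ℓ : Euc n →ᵃ[ℝ] ℝ} (h0 : ℓ ≠ 0) (h : ∀ y ∈ P, 0 ≤ ℓ y)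
    {x : Euc n} (hx : x ∈ interior P) : 0 < ℓ x := by
  have hxP := interior_subset hx
  rcases (h x hxP).lt_or_eq with h1 | h1
  · exact h1
  exfalso
  apply h0
  have key : ∀ v : Euc n, 0 ≤ ℓ.linear v := by
    intro v
    have hc : Tendsto (fun ε : ℝ => x + ε • v) (𝓝[>] 0) (𝓝 x) := by
      have : Continuous (fun ε : ℝ => x + ε • v) := by fun_prop
      have h2 := this.tendsto 0
      simp only [zero_smul, add_zero] at h2
      exact h2.mono_left nhdsWithin_le_nhds
    have h3 := (hc.eventually (isOpen_interior.mem_nhds hx)).and self_mem_nhdsWithin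
    obtain ⟨ε, hε, hε0⟩ := h3.exists
    have h4 := h _ (interior_subset hε)
    have h5 : ℓ (x + ε • v) = ε * ℓ.linear v := by
      have := ℓ.map_vadd x (ε • v)
      simp only [vadd_eq_add, map_smul, smul_eq_mul] at this
      rw [add_comm, this, ← h1, add_zero]
    rw [h5] at h4
    exact nonneg_of_mul_nonneg_right h4 hε0
  ext y
  have h6 := ℓ.map_vadd x (y - x)
  simp only [vadd_eq_add, sub_add_cancel, ← h1, add_zero] at h6
  rw [h6]
  have a := key (y - x)
  have b := key (-(y - x))
  rw [map_neg] at b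
  show _ = (0:ℝ)
  linarith

lemma poly_convex {n : ℕ} {P : Set (Euc n)} (hP : IsPolytope P) : Convex ℝ P := by
  obtain ⟨_, _, m, L, _, rfl⟩ := hP
  refine convex_iInter fun k => ?_
  exact (convex_Ici (0:ℝ)).affine_preimage (L k)

lemma aff_cont {n : ℕ} (ℓ : Euc n →ᵃ[ℝ] ℝ) : Continuous ℓ := AffineMap.continuous_of_finiteDimensional ℓ

lemma vspan_le_ker {n : ℕ} {F : Set (Euc n)} {ℓ : Euc n →ᵃ[ℝ] ℝ} (h : ∀ y ∈ F, ℓ y = 0) :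
    vectorSpan ℝ F ≤ LinearMap.ker ℓ.linear := by
  rw [vectorSpan_def, Submodule.span_le]
  rintro _ ⟨a, ha, b, hb, rfl⟩
  simp only [SetLike.mem_coe, LinearMap.mem_ker]
  have := ℓ.linearMap_vsub a b
  rw [this, h a ha, h b hb]; simp

lemma finrank_facelike {n : ℕ} {P F : Set (Euc n)} {ℓ : Euc n →ᵃ[ℝ] ℝ} (h : ∀ y ∈ F, ℓ y = 0) {x : Euc n}
    (hx : ℓ x ≠ 0) (hF : F.Nonempty) : Module.finrank ℝ (vectorSpan ℝ F) + 1 ≤ n := by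
  obtain ⟨p, hp⟩ := hF
  have hne : LinearMap.ker ℓ.linear ≠ ⊤ := by
    intro htop
    have : (x - p) ∈ LinearMap.ker ℓ.linear := by rw [htop]; trivial
    rw [LinearMap.mem_ker] at this
    have h2 := ℓ.linearMap_vsub x p
    simp only [vsub_eq_sub] at h2
    rw [this, h p hp] at h2
    simp at h2; exact hx h2.symm
  have h1 := Submodule.finrank_mono (vspan_le_ker h)
  have h2 := Submodule.finrank_lt hne
  have h3 : Module.finrank ℝ (Euc n) = n := by simp [Euc]
  omega

/-- every boundary point is on a facet among the given zero loci -/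
lemma frontier_facets {n : ℕ} {P : Set (Euc n)} (hP : IsPolytope P) :
    ∃ (m : ℕ) (F : Fin m → Set (Euc n)), (∀ k, IsFaceOf P (F k)) ∧
      frontier P ⊆ ⋃ k ∈ {k | IsFacetOf P (F k)}, F k := by
  obtain ⟨hc, ⟨x0, hx0⟩, m, L, hL0, hPL⟩ := hP
  have hcl := hc.isClosed
  have hnn : ∀ k, ∀ y ∈ P, 0 ≤ L k y := by
    intro k y hy; rw [hPL] at hy; exact Set.mem_iInter.1 hy k
  set F : Fin m → Set (Euc n) := fun k => {y ∈ P | L k y = 0} with hF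
  have hface : ∀ k, IsFaceOf P (F k) := fun k => ⟨L k, hL0 k, hnn k, rfl⟩
  have hFcl : ∀ k, IsClosed (F k) := fun k =>
    hcl.inter (isClosed_eq (aff_cont (L k)) continuous_const)
  have hcover : ∀ y ∈ frontier P, ∃ k, y ∈ F k := by
    intro y hy
    have hyP := hcl.frontier_subset hy
    by_contra hcon
    push Not at hcon
    have hpos : ∀ k, 0 < L k y := fun k =>
      lt_of_le_of_ne (hnn k y hyP) (fun h => hcon k ⟨hyP, h.symm⟩)
    have hop : IsOpen (⋂ k, {x | 0 < L k x}) :=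
      isOpen_iInter_of_finite fun k => isOpen_lt continuous_const (aff_cont (L k))
    have hsub : (⋂ k, {x | 0 < L k x}) ⊆ P := by
      rw [hPL]; exact Set.iInter_mono fun k x (hx : 0 < L k x) => (show 0 ≤ L k x from hx.le)
    have : y ∈ interior P := interior_maximal hsub hop (Set.mem_iInter.2 hpos)
    exact hy.2 this
  refine ⟨m, F, hface, ?_⟩
  intro y hy
  by_contra hcon
  have hclK : IsClosed (⋃ k ∈ {k | IsFacetOf P (F k)}, F k) :=
    Set.Finite.isClosed_biUnion (Set.toFinite _) fun k _ => hFcl k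
  obtain ⟨ε, hε, hball⟩ := Metric.isOpen_iff.1 hclK.isOpen_compl y hcon
  -- exterior point
  have hy1 : y ∈ closure Pᶜ := by
    have := frontier_compl P ▸ hy
    exact this.1
  obtain ⟨z, hzP, hzd⟩ := Metric.mem_closure_iff.1 hy1 ε hε
  have hzB : z ∈ Metric.ball y ε := by rw [Metric.mem_ball, dist_comm]; exact hzd
  have hconv : Convex ℝ P := poly_convex ⟨hc, ⟨x0, hx0⟩, m, L, hL0, hPL⟩
  have hyi : y ∈ closure (interior P) := by
    rw [hconv.closure_interior_eq_closure_of_nonempty_interior ⟨x0, hx0⟩]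
    exact hy.1
  have hW : (Metric.ball y ε ∩ interior P).Nonempty :=
    mem_closure_iff.1 hyi _ Metric.isOpen_ball (Metric.mem_ball_self hε)
  have hWo : IsOpen (Metric.ball y ε ∩ interior P) := Metric.isOpen_ball.inter isOpen_interior
  have hsub : Metric.ball y ε ∩ interior P ⊆
      ⋃ k ∈ {k | ¬ IsFacetOf P (F k) ∧ (F k).Nonempty}, (affineSpan ℝ (insert z (F k)) : Set (Euc n)) := by
    rintro x ⟨hxB, hxP⟩
    obtain ⟨w, hw, hwf⟩ := seg_frontier hcl (interior_subset hxP) hzP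
    have hwB : w ∈ Metric.ball y ε := (convex_ball y ε).segment_subset hxB hzB hw
    obtain ⟨k, hk⟩ := hcover w hwf
    refine Set.mem_biUnion (x := k) ⟨fun hfac => hball hwB (Set.mem_biUnion (x := k) hfac hk), ⟨w, hk⟩⟩ ?_
    have hzs : z ∈ affineSpan ℝ (insert z (F k)) := subset_affineSpan ℝ _ (Set.mem_insert _ _)
    have hws : w ∈ affineSpan ℝ (insert z (F k)) :=
      subset_affineSpan ℝ _ (Set.mem_insert_of_mem _ hk)
    rw [segment_eq_image_lineMap] at hw
    obtain ⟨t, ht, rfl⟩ := hw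
    have ht1 : t ≠ 1 := by
      rintro rfl
      simp only [AffineMap.lineMap_apply_one] at hk
      exact hzP hk.1
    have h1 : (1 - t) ≠ 0 := sub_ne_zero.2 (Ne.symm ht1)
    have : x = AffineMap.lineMap z (AffineMap.lineMap x z t : Euc n) ((1 - t)⁻¹) := by
      simp only [AffineMap.lineMap_apply_module]
      rw [smul_add, smul_smul, smul_smul, inv_mul_cancel₀ h1, one_smul]
      have : (1 - (1 - t)⁻¹ : ℝ) = - ((1 - t)⁻¹ * t) := by field_simp; ring
      rw [this]; module
    rw [this]
    exact AffineMap.lineMap_mem _ hzs hws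
  have hnull : volume (Metric.ball y ε ∩ interior P) = 0 := by
    refine measure_mono_null hsub ?_
    rw [measure_biUnion_null_iff (Set.to_countable _)]
    rintro k ⟨hk, hkne⟩
    apply Measure.addHaar_affineSubspace
    intro htop
    have h1 : Module.finrank ℝ (vectorSpan ℝ (insert z (F k))) = n := by
      rw [← direction_affineSpan, htop, AffineSubspace.direction_top, finrank_top]
      simp [Euc]
    have h2 := finrank_vectorSpan_insert_le_set (k := ℝ) (F k) z
    have h3 := finrank_facelike (P := P) (F := F k) (ℓ := L k) (fun y hy => hy.2)
      (aff_pos (hL0 k) (hnn k) hx0).ne' hkne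
    have h4 : Module.finrank ℝ (vectorSpan ℝ (F k)) + 1 ≠ n := fun h => hk ⟨hface k, h⟩
    omega
  exact (hWo.measure_pos volume hW).ne' hnull

def coneOver {n : ℕ} (x0 : Euc n) (F : Set (Euc n)) : Set (Euc n) :=
  {x | ∃ s ∈ Set.Ioc (0:ℝ) 1, ∃ y ∈ F, x = x0 + s • (y - x0)}

lemma lintegral_comp_smul_le {V : Type*} [NormedAddCommGroup V] [NormedSpace ℝ V] [FiniteDimensional ℝ V]
    [MeasurableSpace V] [BorelSpace V] (ν : Measure V) [ν.IsAddHaarMeasure] {s : ℝ} (hs : s ∈ Set.Ioc (0:ℝ) 1)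
    (f : V → ℝ≥0∞) (hf : Measurable f) : ∫⁻ v, f v ∂ν ≤ ∫⁻ v, f (s • v) ∂ν := by
  have h1 : ∫⁻ v, f (s • v) ∂ν = ∫⁻ v, f v ∂(Measure.map (s • ·) ν) := by
    rw [lintegral_map hf (measurable_const_smul s)]
  rw [h1, Measure.map_addHaar_smul ν hs.1.ne', lintegral_smul_measure]
  have h2 : (1:ℝ≥0∞) ≤ ENNReal.ofReal |(s ^ Module.finrank ℝ V)⁻¹| := by
    rw [ENNReal.one_le_ofReal, abs_of_nonneg (by have := hs.1; positivity)]
    exact (one_le_inv₀ (pow_pos hs.1 _)).2 (pow_le_one₀ hs.1.le hs.2)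
  calc _ = 1 * ∫⁻ v, f v ∂ν := (one_mul _).symm
    _ ≤ _ := by rw [smul_eq_mul]; gcongr

lemma cone_core {n : ℕ} (V : Submodule ℝ (Euc n)) (hV : Module.finrank ℝ V + 1 = n) (x0 p : Euc n)
    (hp : p - x0 ∉ V) : ∃ C : ℝ≥0, ∀ (F : Set (Euc n)), MeasurableSet F → (∀ y ∈ F, y - p ∈ V) →
      ∀ g : Euc n → ℝ≥0∞, Measurable g →
      ∫⁻ x in coneOver x0 F, g x ≤ C * ∫⁻ s in Set.Ioc (0:ℝ) 1, ∫⁻ y in F, g (x0 + s • (y - x0))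
        ∂(Measure.hausdorffMeasure ((n:ℝ) - 1)) := by
  have hn : ((n:ℝ) - 1) = (Module.finrank ℝ V : ℝ) := by
    have : ((Module.finrank ℝ V + 1 : ℕ) : ℝ) = n := by exact_mod_cast hV
    push_cast at this; linarith
  rw [hn]
  set ν : Measure V := Measure.hausdorffMeasure (Module.finrank ℝ V : ℝ) with hν
  have : ν.IsAddHaarMeasure := isAddHaarMeasure_hausdorffMeasure
  let Λ0 : (V × ℝ) →ₗ[ℝ] Euc n := V.subtype.coprod ((LinearMap.id : ℝ →ₗ[ℝ] ℝ).smulRight (p - x0))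
  have hΛ0 : ∀ q : V × ℝ, Λ0 q = (q.1 : Euc n) + q.2 • (p - x0) := by
    intro q; simp [Λ0]
  have hinj : Function.Injective Λ0 := by
    rw [← LinearMap.ker_eq_bot, LinearMap.ker_eq_bot']
    rintro ⟨v, s⟩ h
    rw [hΛ0] at h
    simp only at h
    have hs : s = 0 := by
      by_contra hs
      apply hp
      have : p - x0 = s⁻¹ • (-(v : Euc n)) := by
        rw [eq_neg_of_add_eq_zero_left h, neg_neg, smul_smul, inv_mul_cancel₀ hs, one_smul]
      rw [this]
      exact V.smul_mem _ (V.neg_mem v.2)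
    subst hs
    simp only [zero_smul, add_zero] at h
    ext1
    · simpa using h
    · rfl
  have hfr : Module.finrank ℝ (V × ℝ) = Module.finrank ℝ (Euc n) := by
    rw [Module.finrank_prod, Module.finrank_self, hV]; simp [Euc]
  let Λ : (V × ℝ) ≃L[ℝ] Euc n := (LinearEquiv.ofInjectiveOfFinrankEq Λ0 hinj hfr).toContinuousLinearEquiv
  have hΛ : ∀ q : V × ℝ, Λ q = (q.1 : Euc n) + q.2 • (p - x0) := by
    intro q; rw [← hΛ0]; rfl
  have : (Measure.map Λ (ν.prod volume)).IsAddHaarMeasure := inferInstance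
  have hvol := Measure.isAddLeftInvariant_eq_smul (volume : Measure (Euc n)) (Measure.map Λ (ν.prod volume))
  set c := Measure.addHaarScalarFactor (volume : Measure (Euc n)) (Measure.map Λ (ν.prod volume)) with hc
  refine ⟨c, fun F hF hFV g hg => ?_⟩
  -- the isometry
  let ι : V → Euc n := fun v => p + v
  have hι : Isometry ι := by
    refine Isometry.of_dist_eq fun a b => ?_
    simp [ι, dist_eq_norm]
  have hιm := hι.map_hausdorffMeasure (d := (Module.finrank ℝ V : ℝ)) (Or.inl (by positivity))
  have hFr : F ⊆ Set.range ι := by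
    intro y hy
    exact ⟨⟨y - p, hFV y hy⟩, by simp [ι]⟩
  -- inner integral
  have hinner : ∀ h : Euc n → ℝ≥0∞, Measurable h →
      ∫⁻ y in F, h y ∂(Measure.hausdorffMeasure (Module.finrank ℝ V : ℝ)) = ∫⁻ v in ι ⁻¹' F, h (ι v) ∂ν := by
    intro h hh
    have e1 : (Measure.hausdorffMeasure (Module.finrank ℝ V : ℝ) : Measure (Euc n)).restrict F
        = (Measure.map ι ν).restrict F := by
      rw [hν, hιm, Measure.restrict_restrict hF, Set.inter_eq_left.2 hFr]
    rw [e1, setLIntegral_map hF hh hι.continuous.measurable]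
  let A : (V × ℝ) → Euc n := fun q => x0 + Λ q
  have hAc : Continuous A := by fun_prop
  let Dset : Set (V × ℝ) := {q | q.2 ∈ Set.Ioc (0:ℝ) 1 ∧ ι (q.2⁻¹ • q.1) ∈ F}
  have hιc : Continuous ι := hι.continuous
  have hm1 : Measurable fun q : V × ℝ => ι (q.2⁻¹ • q.1) :=
    hιc.measurable.comp ((measurable_snd.inv).smul measurable_fst)
  have hD : MeasurableSet Dset :=
    (measurable_snd measurableSet_Ioc).inter (hm1 hF)
  let G : Euc n → ℝ≥0∞ := fun x => (coneOver x0 F).indicator g x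
  have hΛs : ∀ x, Λ (Λ.symm x) = x := fun x => Λ.apply_symm_apply x
  have hconeD : ∀ q, A q ∈ coneOver x0 F → q ∈ Dset := by
    rintro q ⟨s, hs, y, hy, hq⟩
    have h1 : Λ q = Λ (s • ⟨y - p, hFV y hy⟩, s) := by
      have : Λ q = s • (y - x0) := by simpa [A] using hq
      rw [this, hΛ]
      simp only [Submodule.coe_smul]
      module
    have h2 := Λ.injective h1
    rw [h2]
    refine ⟨hs, ?_⟩
    simp only [ι, smul_smul, inv_mul_cancel₀ hs.1.ne', one_smul]
    simpa using hy
  calc ∫⁻ x in coneOver x0 F, g x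
      ≤ ∫⁻ x, (Dset.indicator (fun q => g (A q))) (Λ.symm (x - x0)) := by
        have hMm : MeasurableSet {x | Λ.symm (x - x0) ∈ Dset} := by
          have : Continuous fun x : Euc n => Λ.symm (x - x0) := by fun_prop
          exact this.measurable hD
        have hsub : coneOver x0 F ⊆ {x | Λ.symm (x - x0) ∈ Dset} := by
          intro x hx
          apply hconeD
          simp only [A, hΛs]
          simpa using hx
        refine (lintegral_mono_set hsub).trans ?_
        rw [← lintegral_indicator hMm]
        refine lintegral_mono fun x => ?_
        by_cases hx : Λ.symm (x - x0) ∈ Dset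
        · rw [Set.indicator_of_mem (by exact hx), Set.indicator_of_mem hx]
          simp [A]
        · rw [Set.indicator_of_notMem (by exact hx)]; exact zero_le
    _ = ∫⁻ x, (Dset.indicator (fun q => g (A q))) (Λ.symm x) := by
        exact lintegral_sub_right_eq_self (fun x => (Dset.indicator (fun q => g (A q))) (Λ.symm x)) x0
    _ = c * ∫⁻ q, (Dset.indicator (fun q => g (A q))) q ∂(ν.prod volume) := by
        rw [hvol, lintegral_smul_measure, lintegral_map]
        · simp [ENNReal.smul_def]
        · exact ((hg.comp hAc.measurable).indicator hD).comp Λ.symm.continuous.measurable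
        · exact Λ.continuous.measurable
    _ = c * ∫⁻ s : ℝ, ∫⁻ v : V, (Dset.indicator (fun q => g (A q))) (v, s) ∂ν := by
        congr 1
        exact lintegral_prod_symm' _ ((hg.comp hAc.measurable).indicator hD)
    _ ≤ c * ∫⁻ s in Set.Ioc (0:ℝ) 1, ∫⁻ y in F, g (x0 + s • (y - x0))
        ∂(Measure.hausdorffMeasure (Module.finrank ℝ V : ℝ)) := by
        refine mul_le_mul_right ?_ _
        rw [← lintegral_indicator measurableSet_Ioc]
        refine lintegral_mono fun s => ?_
        by_cases hs : s ∈ Set.Ioc (0:ℝ) 1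
        · rw [Set.indicator_of_mem hs]
          refine (lintegral_comp_smul_le ν hs _ ?_).trans ?_
          · exact ((hg.comp hAc.measurable).indicator hD).comp (measurable_id.prodMk measurable_const)
          rw [hinner (fun y => g (x0 + s • (y - x0))) (hg.comp (by fun_prop : Continuous fun y : Euc n => x0 + s • (y - x0)).measurable),
            ← lintegral_indicator (hιc.measurable hF)]
          refine lintegral_mono fun v => ?_
          by_cases hv : ι v ∈ F
          · rw [Set.indicator_of_mem (show v ∈ ι ⁻¹' F from hv)]
            refine (Set.indicator_le_self _ _ _).trans (le_of_eq ?_)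
            simp only [A, hΛ, ι, Submodule.coe_smul]
            congr 2
            module
          · rw [Set.indicator_of_notMem]
            · exact zero_le
            · rintro ⟨_, h⟩
              simp only [smul_smul, inv_mul_cancel₀ hs.1.ne', one_smul] at h
              exact hv h
        · rw [Set.indicator_of_notMem hs]
          simp only [nonpos_iff_eq_zero]
          refine (lintegral_congr fun v => ?_).trans lintegral_zero
          exact Set.indicator_of_notMem (fun h => hs h.1) _

lemma hausdorff_fin {n : ℕ} (V : Submodule ℝ (Euc n)) (hV : Module.finrank ℝ V + 1 = n) (p : Euc n)
    (F : Set (Euc n)) (hF : Bornology.IsBounded F) (hFV : ∀ y ∈ F, y - p ∈ V) :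
    Measure.hausdorffMeasure ((n:ℝ) - 1) F < ⊤ := by
  have hn : ((n:ℝ) - 1) = (Module.finrank ℝ V : ℝ) := by
    have : ((Module.finrank ℝ V + 1 : ℕ) : ℝ) = n := by exact_mod_cast hV
    push_cast at this; linarith
  rw [hn]
  let ι : V → Euc n := fun v => p + v
  have hι : Isometry ι := by
    refine Isometry.of_dist_eq fun a b => ?_
    simp [ι, dist_eq_norm]
  have hFr : F ⊆ Set.range ι := by
    intro y hy
    exact ⟨⟨y - p, hFV y hy⟩, by simp [ι]⟩
  rw [← Set.inter_eq_left.2 hFr, ← hι.hausdorffMeasure_preimage (Or.inl (by positivity))]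
  have : (Measure.hausdorffMeasure (Module.finrank ℝ V : ℝ) : Measure V).IsAddHaarMeasure :=
    isAddHaarMeasure_hausdorffMeasure
  exact (hι.antilipschitz.isBounded_preimage hF).measure_lt_top

lemma facet_est {n : ℕ} (S : NSystem n) {x0 : Euc n} (hx0 : x0 ∈ interior S.P) {F : Set (Euc n)}
    (hF : IsFacetOf S.P F) : S.σ F < ⊤ ∧ ∃ C : ℝ≥0∞, C ≠ ⊤ ∧ ∀ g : Euc n → ℝ≥0∞, Measurable g →
      ∫⁻ x in coneOver x0 F, g x ≤ C * ∫⁻ s in Set.Ioc (0:ℝ) 1, ∫⁻ y in frontier S.P,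
        g (x0 + s • (y - x0)) ∂S.σ := by
  have hPc : IsCompact S.P := S.simple.1.1
  obtain ⟨c, hc, hσ⟩ := S.flat_bdry F hF
  obtain ⟨⟨ℓ, hℓ0, hℓ, hFe⟩, hfr⟩ := hF
  have hFc : IsClosed F := by
    rw [hFe]; exact hPc.isClosed.inter (isClosed_eq (aff_cont ℓ) continuous_const)
  have hFP : F ⊆ S.P := by rw [hFe]; exact fun y hy => hy.1
  have hF0 : ∀ y ∈ F, ℓ y = 0 := by rw [hFe]; exact fun y hy => hy.2
  have hFfr : F ⊆ frontier S.P := by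
    intro y hy
    rw [mem_frontier_iff_notMem_interior (hFP hy)]
    intro h
    exact (aff_pos hℓ0 hℓ h).ne' (hF0 y hy)
  have hσF : S.σ F = ENNReal.ofReal c * Measure.hausdorffMeasure ((n:ℝ) - 1) F := by
    have := congrArg (fun m : Measure (Euc n) => m Set.univ) hσ
    simpa using this
  rcases F.eq_empty_or_nonempty with rfl | ⟨p, hp⟩
  · refine ⟨by simp, 0, by simp, fun g _ => ?_⟩
    have : coneOver x0 (∅ : Set (Euc n)) = ∅ := by
      ext x; simp [coneOver]
    rw [this]; simp
  have hFV : ∀ y ∈ F, y - p ∈ vectorSpan ℝ F := fun y hy => vsub_mem_vectorSpan ℝ hy hp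
  have hpx : p - x0 ∉ vectorSpan ℝ F := by
    intro h
    have h1 := vspan_le_ker hF0 h
    rw [LinearMap.mem_ker] at h1
    have h2 := ℓ.linearMap_vsub p x0
    simp only [vsub_eq_sub] at h2
    rw [h1, hF0 p hp] at h2
    have := aff_pos hℓ0 hℓ hx0
    linarith
  refine ⟨?_, ?_⟩
  · rw [hσF]
    exact ENNReal.mul_lt_top ENNReal.ofReal_lt_top
      (hausdorff_fin _ hfr p F (hPc.isBounded.subset hFP) hFV)
  obtain ⟨C, hC⟩ := cone_core _ hfr x0 p hpx
  refine ⟨C * (ENNReal.ofReal c)⁻¹, ENNReal.mul_ne_top ENNReal.coe_ne_top (by simpa using hc), fun g hg => ?_⟩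
  refine (hC F hFc.measurableSet hFV g hg).trans ?_
  rw [mul_assoc]
  refine mul_le_mul_right ?_ _
  rw [← lintegral_const_mul' _ _ (by simpa using hc)]
  refine lintegral_mono fun s => ?_
  have hle : S.σ.restrict F ≤ S.σ.restrict (frontier S.P) := Measure.restrict_mono hFfr le_rfl
  calc _ = (ENNReal.ofReal c)⁻¹ * ∫⁻ y in F, g (x0 + s • (y - x0)) ∂S.σ := by
        rw [hσ, lintegral_smul_measure, smul_eq_mul, ← mul_assoc, ENNReal.inv_mul_cancel, one_mul]
        · simpa using hc
        · simp
    _ ≤ _ := mul_le_mul_right (lintegral_mono' hle le_rfl) _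

lemma geom {n : ℕ} (S : NSystem n) (hn : n ≠ 0) {x0 : Euc n} (hx0 : x0 ∈ interior S.P) :
    S.σ (frontier S.P) < ⊤ ∧ ∃ C : ℝ≥0∞, C ≠ ⊤ ∧ ∀ g : Euc n → ℝ≥0∞, Measurable g →
      ∫⁻ x in S.P, g x ∂S.μ ≤ C * ∫⁻ y in frontier S.P, (∫⁻ s in Set.Ioc (0:ℝ) 1,
        g (x0 + s • (y - x0))) ∂S.σ := by
  obtain ⟨m, F, hface, hcov⟩ := frontier_facets S.simple.1
  have hPc : IsCompact S.P := S.simple.1.1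
  have hfin : S.σ (frontier S.P) < ⊤ := by
    refine (measure_mono hcov).trans_lt ?_
    refine measure_biUnion_lt_top (Set.toFinite _) fun k hk => (facet_est S hx0 hk).1
  refine ⟨hfin, ?_⟩
  have : IsFiniteMeasure (S.σ.restrict (frontier S.P)) := ⟨by simpa using hfin⟩
  have hex : ∀ k, ∃ C : ℝ≥0∞, C ≠ ⊤ ∧ (IsFacetOf S.P (F k) → ∀ g : Euc n → ℝ≥0∞, Measurable g →
      ∫⁻ x in coneOver x0 (F k), g x ≤ C * ∫⁻ s in Set.Ioc (0:ℝ) 1, ∫⁻ y in frontier S.P,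
        g (x0 + s • (y - x0)) ∂S.σ) := by
    intro k
    by_cases hk : IsFacetOf S.P (F k)
    · obtain ⟨_, C, hC, h⟩ := facet_est S hx0 hk
      exact ⟨C, hC, fun _ => h⟩
    · exact ⟨0, by simp, fun h => absurd h hk⟩
  choose C hC hCest using hex
  obtain ⟨c, hc, hμ⟩ := S.flat
  refine ⟨ENNReal.ofReal c * ∑ k, C k, ENNReal.mul_ne_top ENNReal.ofReal_ne_top
    (ENNReal.sum_ne_top.2 fun k _ => hC k), fun g hg => ?_⟩
  have hswap : ∫⁻ y in frontier S.P, (∫⁻ s in Set.Ioc (0:ℝ) 1, g (x0 + s • (y - x0))) ∂S.σ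
      = ∫⁻ s in Set.Ioc (0:ℝ) 1, ∫⁻ y in frontier S.P, g (x0 + s • (y - x0)) ∂S.σ := by
    apply lintegral_lintegral_swap
    apply Measurable.aemeasurable
    exact hg.comp (by fun_prop : Continuous fun q : Euc n × ℝ => x0 + q.2 • (q.1 - x0)).measurable
  rw [hswap, hμ, Measure.restrict_smul, lintegral_smul_measure,
    Measure.restrict_restrict hPc.isClosed.measurableSet, Set.inter_self, smul_eq_mul, mul_assoc]
  refine mul_le_mul_right ?_ _
  have hconv := poly_convex S.simple.1
  have hcone : S.P ⊆ {x0} ∪ ⋃ k ∈ {k | IsFacetOf S.P (F k)}, coneOver x0 (F k) := by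
    intro x hx
    by_cases hxx : x = x0
    · left; exact hxx
    right
    -- a far away point
    obtain ⟨R, hR⟩ := hPc.isBounded.subset_closedBall x0
    have hd : 0 < ‖x - x0‖ := norm_pos_iff.2 (sub_ne_zero.2 hxx)
    have hR0 : 0 ≤ R := dist_nonneg.trans (hR hx)
    set T : ℝ := 1 + (R + 1) / ‖x - x0‖ with hT
    have hT1 : 1 ≤ T := by rw [hT]; have : 0 ≤ (R + 1) / ‖x - x0‖ := by positivity
                           linarith
    have hz : x0 + T • (x - x0) ∉ S.P := by
      intro h
      have h1 := hR h
      rw [Metric.mem_closedBall, dist_eq_norm, add_sub_cancel_left, norm_smul, Real.norm_eq_abs,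
        abs_of_nonneg (by linarith), hT, add_mul, div_mul_cancel₀ _ hd.ne'] at h1
      linarith
    obtain ⟨y, hy, hyf⟩ := seg_frontier hPc.isClosed hx hz
    obtain ⟨k, hk, hyk⟩ := Set.mem_iUnion₂.1 (hcov hyf)
    refine Set.mem_biUnion (x := k) hk ?_
    rw [segment_eq_image] at hy
    obtain ⟨θ, hθ, rfl⟩ := hy
    set r : ℝ := 1 + θ * (T - 1) with hr
    have hr1 : 1 ≤ r := by
      have := mul_nonneg hθ.1 (sub_nonneg.2 hT1); linarith
    refine ⟨r⁻¹, ⟨by positivity, inv_le_one_of_one_le₀ hr1⟩, _, hyk, ?_⟩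
    have : (1 - θ) • x + θ • (x0 + T • (x - x0)) - x0 = r • (x - x0) := by rw [hr]; module
    rw [this, smul_smul, inv_mul_cancel₀ (by positivity), one_smul]; abel
  have : Nonempty (Fin n) := ⟨⟨0, Nat.pos_of_ne_zero hn⟩⟩
  have hsing : ∫⁻ x in ({x0} : Set (Euc n)), g x = 0 := by
    apply setLIntegral_measure_zero; simp
  refine (lintegral_mono_set hcone).trans ((lintegral_union_le _ _ _).trans ?_)
  rw [hsing, zero_add]
  refine (lintegral_iUnion_le _ _).trans ?_
  rw [tsum_fintype, Finset.sum_mul]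
  refine Finset.sum_le_sum fun k _ => ?_
  by_cases hk : IsFacetOf S.P (F k)
  · simp only [Set.mem_ofPred_eq, hk, Set.iUnion_true]
    exact hCest k hk g hg
  · simp [hk]

section basics
variable {n : ℕ} (S : NSystem n)

lemma P_closed : IsClosed S.P := S.simple.1.1.isClosed
lemma P_convex : Convex ℝ S.P := poly_convex S.simple.1

lemma mu_restrict : S.μ.restrict S.P = S.μ := by
  obtain ⟨c, hc, hμ⟩ := S.flat
  rw [hμ, Measure.restrict_smul, Measure.restrict_restrict (P_closed S).measurableSet, Set.inter_self]

lemma mu_fin : IsFiniteMeasure S.μ := by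
  obtain ⟨c, hc, hμ⟩ := S.flat
  refine ⟨?_⟩
  rw [hμ]
  simp only [Measure.smul_apply, Measure.restrict_apply_univ, smul_eq_mul]
  exact ENNReal.mul_lt_top ENNReal.ofReal_lt_top S.simple.1.1.measure_lt_top

lemma mu_open_pos {O : Set (Euc n)} (hO : IsOpen O) (hne : O.Nonempty) (hOP : O ⊆ S.P) : S.μ O ≠ 0 := by
  obtain ⟨c, hc, hμ⟩ := S.flat
  rw [hμ]
  simp only [Measure.smul_apply, smul_eq_mul, ne_eq, mul_eq_zero, not_or]
  refine ⟨by simpa using hc, ?_⟩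
  rw [Measure.restrict_apply hO.measurableSet, Set.inter_eq_left.2 hOP]
  exact (hO.measure_pos volume hne).ne'

lemma mu_ne_zero : S.μ S.P ≠ 0 := by
  intro h
  exact mu_open_pos S isOpen_interior S.simple.1.2.1 interior_subset
    (measure_mono_null interior_subset h)

lemma mu_ne_top : S.μ S.P ≠ ⊤ := by
  have := mu_fin S
  exact measure_ne_top _ _

lemma mu_univ : S.μ Set.univ = S.μ S.P := by
  conv_lhs => rw [← mu_restrict S]
  exact Measure.restrict_apply_univ _

lemma ae_int : ∀ᵐ x ∂S.μ, x ∈ interior S.P := by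
  obtain ⟨c, hc, hμ⟩ := S.flat
  rw [hμ]
  refine Measure.ae_smul_measure ?_ _
  rw [ae_restrict_iff' (P_closed S).measurableSet]
  have h0 := (P_convex S).addHaar_frontier volume
  have h1 : ∀ᵐ x, x ∉ frontier S.P := measure_eq_zero_iff_ae_notMem.1 h0
  filter_upwards [h1] with x hx hxP
  by_contra hn
  exact hx ((mem_frontier_iff_notMem_interior hxP).2 hn)

/-- extension by infinity -/
def extTop (u : Euc n → ℝ≥0∞) : Euc n → ℝ≥0∞ := by
  classical exact fun x => if x ∈ S.P then u x else ⊤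

lemma extTop_eq {u : Euc n → ℝ≥0∞} {x : Euc n} (hx : x ∈ S.P) : extTop S u x = u x := by
  simp [extTop, hx]

lemma extTop_meas {u : Euc n → ℝ≥0∞} (hu : LowerSemicontinuousOn u S.P) : Measurable (extTop S u) := by
  apply LowerSemicontinuous.measurable
  intro x a ha
  by_cases hx : x ∈ S.P
  · rw [extTop_eq S hx] at ha
    have := hu x hx a ha
    rw [eventually_nhdsWithin_iff] at this
    filter_upwards [this] with y hy
    by_cases hyP : y ∈ S.P
    · rw [extTop_eq S hyP]; exact hy hyP
    · simp only [extTop, hyP, if_false]; exact ha.trans_le le_top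
  · filter_upwards [(P_closed S).isOpen_compl.mem_nhds hx] with y hy
    have hy' : y ∉ S.P := hy
    simp only [extTop, hy', if_false]
    simpa [extTop, hx] using ha

lemma aem_mu {u : Euc n → ℝ≥0∞} (hu : LowerSemicontinuousOn u S.P) : AEMeasurable u S.μ := by
  refine ⟨extTop S u, extTop_meas S hu, ?_⟩
  filter_upwards [ae_int S] with x hx
  rw [extTop_eq S (interior_subset hx)]

lemma aem_sigma {u : Euc n → ℝ≥0∞} (hu : LowerSemicontinuousOn u S.P) :
    AEMeasurable u (S.σ.restrict (frontier S.P)) := by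
  refine ⟨extTop S u, extTop_meas S hu, ?_⟩
  filter_upwards [ae_restrict_mem isClosed_frontier.measurableSet] with x hx
  rw [extTop_eq S ((P_closed S).frontier_subset hx)]

lemma ray_eq (x0 y : Euc n) (s : ℝ) : x0 + s • (y - x0) = (1 - s) • x0 + s • y := by module

lemma logconv_sum {P : Set (Euc n)} {u : Euc n → ℝ≥0∞} (hu : LogConvexOn P u) {x h : Euc n}
    (h1 : x + h ∈ P) (h2 : x - h ∈ P) : u x ≤ u (x + h) + u (x - h) := by
  have := hu h1 h2 (t := 1/2) (by norm_num) (by norm_num)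
  have e : (1 - (1/2:ℝ)) • (x + h) + (1/2:ℝ) • (x - h) = x := by module
  rw [e] at this
  refine this.trans ?_
  have a1 : u (x + h) ^ (1 - (1/2:ℝ)) ≤ (u (x + h) + u (x - h)) ^ (1 - (1/2:ℝ)) :=
    ENNReal.rpow_le_rpow le_self_add (by norm_num)
  have a2 : u (x - h) ^ (1/2:ℝ) ≤ (u (x + h) + u (x - h)) ^ (1/2:ℝ) :=
    ENNReal.rpow_le_rpow le_add_self (by norm_num)
  refine (mul_le_mul' a1 a2).trans (le_of_eq ?_)
  rw [← ENNReal.rpow_add_of_nonneg _ _ (by norm_num) (by norm_num)]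
  norm_num

lemma MExp_int {u : Euc n → ℝ≥0∞} (hu : u ∈ MExp S 1) : ∫⁻ x, u x ∂S.μ = S.μ S.P := by
  have := hu.2.2.2.1
  rwa [mu_restrict] at this

lemma MExp_iff {u : Euc n → ℝ≥0∞} : u ∈ MExp S 1 ↔ LowerSemicontinuousOn u S.P ∧ (∀ x ∈ S.P, 0 < u x) ∧
    LogConvexOn S.P u ∧ ∫⁻ x, u x ∂S.μ = S.μ S.P := by
  constructor
  · intro h; exact ⟨h.1, h.2.1, h.2.2.1, MExp_int S h⟩
  · rintro ⟨a, b, c, d⟩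
    refine ⟨a, b, c, by rw [mu_restrict]; exact d, ?_⟩
    simp only [ENNReal.rpow_one, mu_restrict, d]
    exact (mu_ne_top S).lt_top

/-- uniform interior bound -/
lemma int_bound {x : Euc n} (hx : x ∈ interior S.P) :
    ∃ A : ℝ, 1 ≤ A ∧ ∀ u ∈ MExp S 1, u x ≤ ENNReal.ofReal A := by
  obtain ⟨r, hr, hb⟩ := Metric.isOpen_iff.1 isOpen_interior x hx
  have hb' : Metric.ball x r ⊆ S.P := hb.trans interior_subset
  obtain ⟨c, hc, hμ⟩ := S.flat
  set v := volume (Metric.ball (0 : Euc n) r) with hv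
  have hv0 : v ≠ 0 := (Metric.measure_ball_pos volume _ hr).ne'
  have hvt : v ≠ ⊤ := measure_ball_lt_top.ne
  have hc0 : ENNReal.ofReal c ≠ 0 := by simpa using hc
  set B : ℝ≥0∞ := v⁻¹ * (2 * ((ENNReal.ofReal c)⁻¹ * S.μ S.P)) with hB
  have hBt : B ≠ ⊤ := by
    rw [hB]
    refine ENNReal.mul_ne_top (by simpa using hv0) (ENNReal.mul_ne_top (by simp)
      (ENNReal.mul_ne_top (by simpa using hc) (mu_ne_top S)))
  refine ⟨max 1 B.toReal, le_max_left _ _, fun u hu => ?_⟩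
  have hle : u x ≤ B := by
    have hue : Measurable (extTop S u) := extTop_meas S hu.1
    have hI : ∫⁻ y in Metric.ball x r, extTop S u y ≤ (ENNReal.ofReal c)⁻¹ * S.μ S.P := by
      have h1 : ∫⁻ y, extTop S u y ∂S.μ = S.μ S.P := by
        rw [← MExp_int S hu]
        refine lintegral_congr_ae ?_
        filter_upwards [ae_int S] with y hy
        exact extTop_eq S (interior_subset hy)
      have h2 : ∫⁻ y, extTop S u y ∂S.μ = ENNReal.ofReal c * ∫⁻ y in S.P, extTop S u y := by
        rw [hμ, lintegral_smul_measure, smul_eq_mul]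
      rw [← h1, h2, ← mul_assoc, ENNReal.inv_mul_cancel hc0 ENNReal.ofReal_ne_top, one_mul]
      exact lintegral_mono_set hb'
    have hp : ∫⁻ h in Metric.ball (0:Euc n) r, extTop S u (x + h) = ∫⁻ y in Metric.ball x r, extTop S u y := by
      rw [← lintegral_indicator measurableSet_ball, ← lintegral_indicator measurableSet_ball,
        ← lintegral_add_left_eq_self ((Metric.ball x r).indicator (extTop S u)) x]
      refine lintegral_congr fun h => ?_
      by_cases hh : h ∈ Metric.ball (0:Euc n) r
      · rw [Set.indicator_of_mem hh, Set.indicator_of_mem (by simpa [dist_eq_norm] using hh)]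
      · rw [Set.indicator_of_notMem hh, Set.indicator_of_notMem (by simpa [dist_eq_norm] using hh)]
    have hm : ∫⁻ h in Metric.ball (0:Euc n) r, extTop S u (x - h) = ∫⁻ y in Metric.ball x r, extTop S u y := by
      rw [← hp, ← lintegral_indicator measurableSet_ball, ← lintegral_indicator measurableSet_ball,
        ← lintegral_neg_eq_self]
      refine lintegral_congr fun h => ?_
      by_cases hh : h ∈ Metric.ball (0:Euc n) r
      · rw [Set.indicator_of_mem hh, Set.indicator_of_mem (by simpa using hh)]
        simp
      · rw [Set.indicator_of_notMem hh, Set.indicator_of_notMem (by simpa using hh)]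
    have hmain : v * u x ≤ 2 * ((ENNReal.ofReal c)⁻¹ * S.μ S.P) := by
      calc v * u x = ∫⁻ _ in Metric.ball (0:Euc n) r, u x := by
            rw [setLIntegral_const, mul_comm]
        _ ≤ ∫⁻ h in Metric.ball (0:Euc n) r, (extTop S u (x + h) + extTop S u (x - h)) := by
            refine setLIntegral_mono' measurableSet_ball fun h hh => ?_
            have e1 : x + h ∈ S.P := hb' (by simpa [dist_eq_norm] using hh)
            have e2 : x - h ∈ S.P := hb' (by simpa [dist_eq_norm] using hh)
            rw [extTop_eq S e1, extTop_eq S e2]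
            exact logconv_sum hu.2.2.1 e1 e2
        _ = (∫⁻ h in Metric.ball (0:Euc n) r, extTop S u (x + h)) + ∫⁻ h in Metric.ball (0:Euc n) r, extTop S u (x - h) := lintegral_add_left (hue.comp (measurable_const_add x)) _
        _ ≤ _ := by rw [hp, hm, two_mul]; exact add_le_add hI hI
    rw [hB, ← one_mul (u x), ← ENNReal.inv_mul_cancel hv0 hvt, mul_assoc]
    exact mul_le_mul_right hmain _
  refine hle.trans ?_
  exact (ENNReal.ofReal_toReal hBt).symm.le.trans (ENNReal.ofReal_le_ofReal (le_max_right _ _))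

end basics

section helly
variable {n : ℕ}

lemma conv_of_logconv {O : Set (Euc n)} (hc : Convex ℝ O) {w : Euc n → ℝ≥0∞}
    (hw : LogConvexOn O w) (hf : ∀ x ∈ O, w x ≠ ⊤) : ConvexOn ℝ O (fun x => (w x).toReal) := by
  refine ⟨hc, fun x hx y hy a b ha hb hab => ?_⟩
  have h := hw hx hy hb (by linarith)
  have e : 1 - b = a := by linarith
  rw [e] at h
  have h2 := ENNReal.toReal_mono (ENNReal.mul_ne_top (ENNReal.rpow_ne_top_of_nonneg ha (hf x hx))
    (ENNReal.rpow_ne_top_of_nonneg hb (hf y hy))) h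
  refine h2.trans ?_
  rw [ENNReal.toReal_mul, ← ENNReal.toReal_rpow, ← ENNReal.toReal_rpow]
  exact Real.geom_mean_le_arith_mean2_weighted ha hb ENNReal.toReal_nonneg ENNReal.toReal_nonneg hab

lemma cont_of_logconv {O : Set (Euc n)} (hO : IsOpen O) (hc : Convex ℝ O) {w : Euc n → ℝ≥0∞}
    (hw : LogConvexOn O w) (hf : ∀ x ∈ O, w x ≠ ⊤) : ContinuousOn w O := by
  have h1 : ContinuousOn (fun x => (w x).toReal) O := (conv_of_logconv hc hw hf).continuousOn hO
  have h2 : ContinuousOn (fun x => ENNReal.ofReal (w x).toReal) O :=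
    ENNReal.continuous_ofReal.comp_continuousOn h1
  exact h2.congr fun x hx => (ENNReal.ofReal_toReal (hf x hx)).symm

lemma limsup_logconv {O : Set (Euc n)} {u : ℕ → Euc n → ℝ≥0∞} (hu : ∀ k, LogConvexOn O (u k))
    {B : Euc n → ℝ≥0∞} (hB : ∀ x ∈ O, B x ≠ ⊤) (huB : ∀ k, ∀ x ∈ O, u k x ≤ B x)
    (G : Filter ℕ) [G.NeBot] :
    LogConvexOn O (fun x => limsup (fun k => u k x) G) ∧ ∀ x ∈ O, limsup (fun k => u k x) G ≠ ⊤ := by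
  have hfin : ∀ x ∈ O, limsup (fun k => u k x) G ≠ ⊤ := fun x hx =>
    ((limsup_le_of_le (h := Eventually.of_forall fun k => huB k x hx)).trans_lt (hB x hx).lt_top).ne
  refine ⟨fun x hx y hy t h0 h1 => ?_, hfin⟩
  have hr : ∀ z ∈ O, ∀ a : ℝ, 0 ≤ a → limsup (fun k => u k z ^ a) G = (limsup (fun k => u k z) G) ^ a := by
    intro z hz a ha
    have := (ENNReal.monotone_rpow_of_nonneg ha).map_limsup_of_continuousAt (F := G)
      (fun k => u k z) (ENNReal.continuous_rpow_const.continuousAt)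
    exact this.symm
  have ha : 0 ≤ 1 - t := by linarith
  calc limsup (fun k => u k ((1 - t) • x + t • y)) G
      ≤ limsup (fun k => u k x ^ (1 - t) * u k y ^ t) G :=
        limsup_le_limsup (Eventually.of_forall fun k => hu k hx hy h0 h1)
    _ ≤ limsup (fun k => u k x ^ (1 - t)) G * limsup (fun k => u k y ^ t) G := by
        refine ENNReal.limsup_mul_le' (Or.inr ?_) (Or.inl ?_)
        · rw [hr y hy t h0]; exact ENNReal.rpow_ne_top_of_nonneg h0 (hfin y hy)
        · rw [hr x hx _ ha]; exact ENNReal.rpow_ne_top_of_nonneg ha (hfin x hx)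
    _ = _ := by rw [hr x hx _ ha, hr y hy t h0]

lemma helly {O : Set (Euc n)} (hO : IsOpen O) (hc : Convex ℝ O) {u : ℕ → Euc n → ℝ≥0∞}
    (hu : ∀ k, LogConvexOn O (u k))
    {B : Euc n → ℝ≥0∞} (hB : ∀ x ∈ O, B x ≠ ⊤) (huB : ∀ k, ∀ x ∈ O, u k x ≤ B x) :
    ∃ φ : ℕ → ℕ, StrictMono φ ∧ ∃ w : Euc n → ℝ≥0∞, LogConvexOn O w ∧ (∀ x ∈ O, w x ≠ ⊤) ∧
      ∀ x ∈ O, Tendsto (fun k => u (φ k) x) atTop (𝓝 (w x)) := by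
  let d := TopologicalSpace.denseSeq (Euc n)
  obtain ⟨a, φ, hφ, hlim⟩ := CompactSpace.tendsto_subseq (fun k => fun i : ℕ => u k (d i))
  rw [tendsto_pi_nhds] at hlim
  let w : Euc n → ℝ≥0∞ := fun x => limsup (fun k => u (φ k) x) atTop
  obtain ⟨hw, hwf⟩ := limsup_logconv (u := fun k => u (φ k)) (fun k => hu _) hB
    (fun k => huB _) atTop
  refine ⟨φ, hφ, w, hw, hwf, fun x hx => ?_⟩
  refine tendsto_of_le_liminf_of_limsup_le ?_ le_rfl
  by_contra hlt
  push Not at hlt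
  obtain ⟨c, hc1, hc2⟩ := exists_between hlt
  have hfr := frequently_lt_of_liminf_lt (h := hc1)
  let G : Filter ℕ := atTop ⊓ 𝓟 {k | u (φ k) x < c}
  have hG : G.NeBot := by
    rw [← frequently_mem_iff_neBot]; exact hfr
  obtain ⟨hv, hvf⟩ := limsup_logconv (u := fun k => u (φ k)) (fun k => hu _) hB
    (fun k => huB _) G
  have hcw := cont_of_logconv hO hc hw hwf
  have hcv := cont_of_logconv hO hc hv hvf
  have heq : Set.EqOn w (fun x => limsup (fun k => u (φ k) x) G) (O ∩ Set.range d) := by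
    rintro z ⟨-, i, rfl⟩
    have h1 : Tendsto (fun k => u (φ k) (d i)) atTop (𝓝 (a i)) := hlim i
    have h2 : Tendsto (fun k => u (φ k) (d i)) G (𝓝 (a i)) := h1.mono_left inf_le_left
    exact h1.limsup_eq.trans h2.limsup_eq.symm
  have := heq.of_subset_closure hcw hcv Set.inter_subset_left
    ((TopologicalSpace.denseRange_denseSeq (Euc n)).open_subset_closure_inter hO) hx
  have h3 : limsup (fun k => u (φ k) x) G ≤ c :=
    limsup_le_of_le (h := by
      have : {k | u (φ k) x < c} ∈ G := mem_inf_of_right (mem_principal_self _)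
      filter_upwards [this] with k hk using le_of_lt hk)
  have h4 : w x ≤ c := this.le.trans h3
  exact absurd hc2 (not_lt.2 h4)

end helly

section entb
variable {n : ℕ} (S : NSystem n)

lemma exp_int {A b : ℝ} (hA : 1 ≤ A) (hb : 0 ≤ b) :
    ∫⁻ s in Set.Ioc (0:ℝ) 1, ENNReal.ofReal (A * Real.exp (s * b) * (1 + s * b))
      = ENNReal.ofReal (A * Real.exp b) := by
  have hc : Continuous fun s : ℝ => A * Real.exp (s * b) * (1 + s * b) := by fun_prop
  have h1 : ∫ s in (0:ℝ)..1, A * Real.exp (s * b) * (1 + s * b) = A * Real.exp b := by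
    rw [intervalIntegral.integral_eq_sub_of_hasDerivAt (f := fun s => A * s * Real.exp (s * b))]
    · simp
    · intro x _
      have e1 : HasDerivAt (fun s : ℝ => Real.exp (s * b)) (Real.exp (x * b) * (1 * b)) x :=
        ((hasDerivAt_id x).mul_const b).exp
      have e2 : HasDerivAt (fun s : ℝ => A * s) (A * 1) x := (hasDerivAt_id x).const_mul A
      exact (e2.fun_mul e1).congr_deriv (by ring)
    · exact hc.intervalIntegrable _ _
  rw [← h1, intervalIntegral.integral_of_le zero_le_one, ofReal_integral_eq_lintegral_ofReal]
  · exact (hc.integrableOn_Icc).mono_set Set.Ioc_subset_Icc_self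
  · filter_upwards [ae_restrict_mem measurableSet_Ioc] with s hs
    have : 0 ≤ s * b := mul_nonneg hs.1.le hb
    simp only [Pi.zero_apply]
    positivity

lemma zlogz_le {z Z : ℝ} (hz : 0 ≤ z) (hzZ : z ≤ Z) (hZ : 1 ≤ Z) : z * Real.log z ≤ Z * Real.log Z := by
  have hZ0 : 0 ≤ Real.log Z := Real.log_nonneg hZ
  rcases le_total z 1 with h | h
  · have := Real.mul_log_nonpos hz h
    nlinarith
  · exact mul_le_mul hzZ (Real.log_le_log (by linarith) hzZ) (Real.log_nonneg h) (by linarith)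

lemma ray_ent {x0 y : Euc n} {A : ℝ} (hA : 1 ≤ A) {u : Euc n → ℝ≥0∞} (hu : LogConvexOn S.P u)
    (hx0 : x0 ∈ S.P) (hy : y ∈ S.P) (hA0 : u x0 ≤ ENNReal.ofReal A) :
    ∫⁻ s in Set.Ioc (0:ℝ) 1, ENNReal.ofReal (xlogx (extTop S u (x0 + s • (y - x0))))
      ≤ ENNReal.ofReal (Real.log A + 1) * (u y + ENNReal.ofReal A) := by
  have hlA : 0 ≤ Real.log A := Real.log_nonneg hA
  by_cases huy : u y = ⊤
  · rw [huy, top_add, ENNReal.mul_top]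
    · exact le_top
    · simp; linarith
  set w : ℝ := max (u y).toReal A with hw
  have hwA : A ≤ w := le_max_right _ _
  have hA0' : 0 < A := by linarith
  have hw0 : 0 < w := by linarith
  set b : ℝ := Real.log (w / A) with hb
  have hb0 : 0 ≤ b := Real.log_nonneg ((one_le_div hA0').2 hwA)
  have hAb : A * Real.exp b = w := by
    rw [hb, Real.exp_log (by positivity)]; field_simp
  have hwle : ENNReal.ofReal w ≤ u y + ENNReal.ofReal A := by
    rw [hw, ENNReal.ofReal_max, ENNReal.ofReal_toReal huy]
    exact max_le le_self_add le_add_self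
  calc ∫⁻ s in Set.Ioc (0:ℝ) 1, ENNReal.ofReal (xlogx (extTop S u (x0 + s • (y - x0))))
      ≤ ∫⁻ s in Set.Ioc (0:ℝ) 1, ENNReal.ofReal (Real.log A + 1) *
          ENNReal.ofReal (A * Real.exp (s * b) * (1 + s * b)) := by
        refine setLIntegral_mono' measurableSet_Ioc fun s hs => ?_
        rw [← ENNReal.ofReal_mul (by linarith)]
        refine ENNReal.ofReal_le_ofReal ?_
        have hsb : 0 ≤ s * b := mul_nonneg hs.1.le hb0
        have hmem : x0 + s • (y - x0) ∈ S.P := by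
          rw [ray_eq]; exact P_convex S hx0 hy (by linarith [hs.2]) hs.1.le (by ring)
        rw [extTop_eq S hmem, xlogx]
        have h1 := hu hx0 hy hs.1.le hs.2
        rw [← ray_eq] at h1
        set Z : ℝ := A * Real.exp (s * b) with hZ
        have hZ1 : 1 ≤ Z := by
          have := Real.one_le_exp hsb
          nlinarith
        have hlog : Real.log Z = Real.log A + s * b := by
          rw [hZ, Real.log_mul hA0'.ne' (Real.exp_pos _).ne', Real.log_exp]
        have hz : (u (x0 + s • (y - x0))).toReal ≤ Z := by
          refine ENNReal.toReal_le_of_le_ofReal (by linarith) (h1.trans ?_)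
          have h2 : u y ≤ ENNReal.ofReal w := by
            rw [hw, ENNReal.ofReal_max, ENNReal.ofReal_toReal huy]; exact le_max_left _ _
          have h3 : u x0 ^ (1 - s) * u y ^ s ≤ ENNReal.ofReal A ^ (1 - s) * ENNReal.ofReal w ^ s :=
            mul_le_mul' (ENNReal.rpow_le_rpow hA0 (by linarith [hs.2])) (ENNReal.rpow_le_rpow h2 hs.1.le)
          refine h3.trans (le_of_eq ?_)
          rw [ENNReal.ofReal_rpow_of_pos hA0', ENNReal.ofReal_rpow_of_pos hw0,
            ← ENNReal.ofReal_mul (by positivity)]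
          congr 1
          rw [hZ, ← hAb, Real.mul_rpow hA0'.le (Real.exp_pos _).le, ← mul_assoc, ← Real.rpow_add hA0',
            ← Real.exp_mul]
          simp [mul_comm]
        refine (zlogz_le ENNReal.toReal_nonneg hz hZ1).trans ?_
        rw [hlog]
        have : Real.log A + s * b ≤ (Real.log A + 1) * (1 + s * b) := by nlinarith
        nlinarith
    _ = ENNReal.ofReal (Real.log A + 1) * ENNReal.ofReal w := by
        rw [lintegral_const_mul, exp_int hA hb0, hAb]
        fun_prop
    _ ≤ _ := mul_le_mul_right hwle _

lemma xlogx_meas : Measurable xlogx := by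
  unfold xlogx
  exact ENNReal.measurable_toReal.mul (Real.measurable_log.comp ENNReal.measurable_toReal)

lemma ent_bound (hn : n ≠ 0) : ∃ K K2 : ℝ≥0∞, K ≠ ⊤ ∧ K2 ≠ ⊤ ∧ ∀ u ∈ MExp S 1,
    ∫⁻ x, ENNReal.ofReal (xlogx (u x)) ∂S.μ ≤ K * (∫⁻ y in frontier S.P, u y ∂S.σ + K2) := by
  obtain ⟨x0, hx0⟩ := S.simple.1.2.1
  obtain ⟨hσ, C, hC, hg⟩ := geom S hn hx0
  obtain ⟨A, hA, hAu⟩ := int_bound S hx0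
  refine ⟨C * ENNReal.ofReal (Real.log A + 1), ENNReal.ofReal A * S.σ (frontier S.P),
    ENNReal.mul_ne_top hC ENNReal.ofReal_ne_top, ENNReal.mul_ne_top ENNReal.ofReal_ne_top hσ.ne,
    fun u hu => ?_⟩
  have hm : Measurable fun x => ENNReal.ofReal (xlogx (extTop S u x)) :=
    (xlogx_meas.comp (extTop_meas S hu.1)).ennreal_ofReal
  calc ∫⁻ x, ENNReal.ofReal (xlogx (u x)) ∂S.μ
      = ∫⁻ x in S.P, ENNReal.ofReal (xlogx (extTop S u x)) ∂S.μ := by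
        rw [mu_restrict]
        refine lintegral_congr_ae ?_
        filter_upwards [ae_int S] with y hy
        rw [extTop_eq S (interior_subset hy)]
    _ ≤ _ := hg _ hm
    _ ≤ C * ∫⁻ y in frontier S.P, ENNReal.ofReal (Real.log A + 1) * (u y + ENNReal.ofReal A) ∂S.σ := by
        refine mul_le_mul_right ?_ _
        refine setLIntegral_mono' isClosed_frontier.measurableSet fun y hy => ?_
        exact ray_ent S hA hu.2.2.1 (interior_subset hx0) ((P_closed S).frontier_subset hy) (hAu u hu)
    _ = _ := by
        rw [lintegral_const_mul' _ _ ENNReal.ofReal_ne_top, lintegral_add_right _ measurable_const,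
          setLIntegral_const, mul_assoc]

end entb

section env
variable {n : ℕ}

/-- one term of the radial envelope -/
def rterm (v : Euc n → ℝ≥0∞) (x0 : Euc n) (s : ℝ) (y : Euc n) : ℝ≥0∞ :=
  v x0 ^ (1 - 1 / s) * v (x0 + s • (y - x0)) ^ (1 / s)

/-- radial envelope -/
def renv (v : Euc n → ℝ≥0∞) (x0 : Euc n) (y : Euc n) : ℝ≥0∞ :=
  ⨆ s : Set.Ioo (0:ℝ) 1, rterm v x0 s y

lemma rterm_le {Q : Set (Euc n)} {v : Euc n → ℝ≥0∞} (hv : LogConvexOn Q v) {x0 y : Euc n}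
    (hx0 : x0 ∈ Q) (hy : y ∈ Q) (h0 : v x0 ≠ 0) (ht : v x0 ≠ ⊤) {s : ℝ} (hs : s ∈ Set.Ioo (0:ℝ) 1) :
    rterm v x0 s y ≤ v y := by
  have h := hv hx0 hy hs.1.le hs.2.le
  rw [← ray_eq] at h
  have hs0 : s ≠ 0 := hs.1.ne'
  have h1s : 0 ≤ 1 / s := by have := hs.1; positivity
  calc rterm v x0 s y ≤ v x0 ^ (1 - 1 / s) * (v x0 ^ (1 - s) * v y ^ s) ^ (1 / s) :=
        mul_le_mul_right (ENNReal.rpow_le_rpow h h1s) _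
    _ = v y := by
        rw [ENNReal.mul_rpow_of_nonneg _ _ h1s, ← ENNReal.rpow_mul, ← ENNReal.rpow_mul, ← mul_assoc,
          ← ENNReal.rpow_add _ _ h0 ht]
        have e1 : 1 - 1 / s + (1 - s) * (1 / s) = 0 := by field_simp; ring
        have e2 : s * (1 / s) = 1 := by field_simp
        rw [e1, e2]; simp

lemma renv_le {Q : Set (Euc n)} {v : Euc n → ℝ≥0∞} (hv : LogConvexOn Q v) {x0 y : Euc n}
    (hx0 : x0 ∈ Q) (hy : y ∈ Q) (h0 : v x0 ≠ 0) (ht : v x0 ≠ ⊤) : renv v x0 y ≤ v y :=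
  iSup_le fun s => rterm_le hv hx0 hy h0 ht s.2

lemma tend_aux {c a : ℝ≥0∞} (h0 : c ≠ 0) (ht : c ≠ ⊤) (a0 : a ≠ 0) (at' : a ≠ ⊤) :
    Tendsto (fun s : ℝ => c ^ (1 - 1 / s) * a ^ (1 / s)) (𝓝[<] 1) (𝓝 a) := by
  have hc : 0 < c.toReal := ENNReal.toReal_pos h0 ht
  have ha : 0 < a.toReal := ENNReal.toReal_pos a0 at'
  have e : ∀ s : ℝ, c ^ (1 - 1 / s) * a ^ (1 / s)
      = ENNReal.ofReal (c.toReal ^ (1 - 1 / s) * a.toReal ^ (1 / s)) := by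
    intro s
    rw [ENNReal.ofReal_mul (by positivity), ← ENNReal.ofReal_rpow_of_pos hc, ← ENNReal.ofReal_rpow_of_pos ha,
      ENNReal.ofReal_toReal ht, ENNReal.ofReal_toReal at']
  simp_rw [e]
  have : ContinuousAt (fun s : ℝ => ENNReal.ofReal (c.toReal ^ (1 - 1 / s) * a.toReal ^ (1 / s))) 1 := by
    refine ENNReal.continuous_ofReal.continuousAt.comp ?_
    have h1 : ContinuousAt (fun s : ℝ => 1 / s) 1 := continuousAt_const.div continuousAt_id one_ne_zero
    have h2 : ContinuousAt (fun s : ℝ => 1 - 1 / s) 1 := continuousAt_const.sub h1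
    exact (continuousAt_const.rpow h2 (Or.inl hc.ne')).mul (continuousAt_const.rpow h1 (Or.inl ha.ne'))
  have h2 := this.tendsto.mono_left (nhdsWithin_le_nhds (s := Set.Iio 1))
  simpa [ENNReal.ofReal_toReal at'] using h2

lemma le_renv {Q : Set (Euc n)} {v : Euc n → ℝ≥0∞} {x0 y : Euc n}
    (hv : LowerSemicontinuousWithinAt v Q y) (hQ : ∀ s ∈ Set.Ioo (0:ℝ) 1, x0 + s • (y - x0) ∈ Q)
    (h0 : v x0 ≠ 0) (ht : v x0 ≠ ⊤) : v y ≤ renv v x0 y := by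
  refine le_of_forall_lt_imp_le_of_dense fun a ha => ?_
  obtain ⟨a', h1, h2⟩ := exists_between ha
  refine h1.le.trans ?_
  have a0 : a' ≠ 0 := (zero_le.trans_lt h1).ne'
  have at' : a' ≠ ⊤ := (h2.trans_le le_top).ne
  refine le_of_tendsto (tend_aux h0 ht a0 at') ?_
  have hIoo : ∀ᶠ s in 𝓝[<] (1:ℝ), s ∈ Set.Ioo (0:ℝ) 1 := Ioo_mem_nhdsLT one_pos
  have hlim : Tendsto (fun s : ℝ => x0 + s • (y - x0)) (𝓝[<] 1) (𝓝[Q] y) := by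
    refine tendsto_nhdsWithin_iff.2 ⟨?_, ?_⟩
    · have hc : Continuous fun s : ℝ => x0 + s • (y - x0) := by fun_prop
      have := hc.tendsto 1
      simp only [one_smul, add_sub_cancel] at this
      exact this.mono_left nhdsWithin_le_nhds
    · filter_upwards [hIoo] with s hs using hQ s hs
  filter_upwards [hIoo, hlim.eventually (hv a' h2)] with s hs hlt
  refine le_trans ?_ (le_iSup (fun s : Set.Ioo (0:ℝ) 1 => rterm v x0 s y) ⟨s, hs⟩)
  refine mul_le_mul_right (ENNReal.rpow_le_rpow hlt.le ?_) _
  have := hs.1; positivity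

variable {P : Set (Euc n)}

lemma ray_int (hP : Convex ℝ P) {x0 y : Euc n} (hx0 : x0 ∈ interior P) (hy : y ∈ P) {s : ℝ}
    (hs : s ∈ Set.Ioo (0:ℝ) 1) : x0 + s • (y - x0) ∈ interior P := by
  rw [ray_eq]
  exact hP.combo_interior_self_mem_interior hx0 hy (by linarith [hs.2]) hs.1.le (by ring)

lemma renv_eq_int (hP : Convex ℝ P) {w : Euc n → ℝ≥0∞} (hw : LogConvexOn (interior P) w)
    (hf : ∀ x ∈ interior P, w x ≠ ⊤) {x0 y : Euc n} (hx0 : x0 ∈ interior P) (h0 : w x0 ≠ 0)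
    (hy : y ∈ interior P) : renv w x0 y = w y := by
  refine le_antisymm (renv_le hw hx0 hy h0 (hf x0 hx0)) (le_renv (Q := interior P) ?_ ?_ h0 (hf x0 hx0))
  · exact (cont_of_logconv isOpen_interior hP.interior hw hf).lowerSemicontinuousOn y hy
  · exact fun s hs => ray_int hP hx0 (interior_subset hy) hs

lemma renv_eq (hP : Convex ℝ P) {u : Euc n → ℝ≥0∞} (hu : LogConvexOn P u) (hl : LowerSemicontinuousOn u P)
    {x0 y : Euc n} (hx0 : x0 ∈ interior P) (h0 : u x0 ≠ 0) (ht : u x0 ≠ ⊤) (hy : y ∈ P) :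
    renv u x0 y = u y :=
  le_antisymm (renv_le hu (interior_subset hx0) hy h0 ht)
    (le_renv (hl y hy) (fun s hs => interior_subset (ray_int hP hx0 hy hs)) h0 ht)

lemma renv_lsc (hP : Convex ℝ P) {w : Euc n → ℝ≥0∞} (hw : LogConvexOn (interior P) w)
    (hf : ∀ x ∈ interior P, w x ≠ ⊤) {x0 : Euc n} (hx0 : x0 ∈ interior P) (h0 : w x0 ≠ 0) :
    LowerSemicontinuousOn (renv w x0) P := by
  refine lowerSemicontinuousOn_iSup fun s => ?_
  refine ContinuousOn.lowerSemicontinuousOn ?_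
  have h1 : ContinuousOn (fun y => w (x0 + (s:ℝ) • (y - x0))) P :=
    (cont_of_logconv isOpen_interior hP.interior hw hf).comp
      (by fun_prop) (fun y hy => ray_int hP hx0 hy s.2)
  exact (ENNReal.continuous_const_mul (by
    refine ENNReal.rpow_ne_top_of_ne_zero h0 (hf x0 hx0))).comp_continuousOn
    (ENNReal.continuous_rpow_const.comp_continuousOn h1)

lemma renv_logconv (hP : Convex ℝ P) {w : Euc n → ℝ≥0∞} (hw : LogConvexOn (interior P) w)
    (hf : ∀ x ∈ interior P, w x ≠ ⊤) {x0 : Euc n} (hx0 : x0 ∈ interior P) (h0 : w x0 ≠ 0) :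
    LogConvexOn P (renv w x0) := by
  intro y hy z hz t t0 t1
  refine iSup_le fun s => ?_
  have hs := s.2
  have h1s : 0 ≤ 1 / (s:ℝ) := by have := hs.1; positivity
  have hle := hw (ray_int hP hx0 hy hs) (ray_int hP hx0 hz hs) t0 t1
  have e : (1 - t) • (x0 + (s:ℝ) • (y - x0)) + t • (x0 + (s:ℝ) • (z - x0))
      = x0 + (s:ℝ) • ((1 - t) • y + t • z - x0) := by module
  rw [e] at hle
  have ht' : 0 ≤ 1 - t := by linarith
  set c := w x0 ^ (1 - 1 / (s:ℝ)) with hc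
  have hc0 : c ≠ 0 := by
    have := ENNReal.rpow_pos (p := 1 - 1 / (s:ℝ)) (pos_iff_ne_zero.2 h0) (hf x0 hx0); exact this.ne'
  have hct : c ≠ ⊤ := ENNReal.rpow_ne_top_of_ne_zero h0 (hf x0 hx0)
  calc rterm w x0 s ((1 - t) • y + t • z)
      ≤ c * (w (x0 + (s:ℝ) • (y - x0)) ^ (1 - t) * w (x0 + (s:ℝ) • (z - x0)) ^ t) ^ (1 / (s:ℝ)) :=
        mul_le_mul_right (ENNReal.rpow_le_rpow hle h1s) _
    _ = rterm w x0 s y ^ (1 - t) * rterm w x0 s z ^ t := by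
        simp only [rterm, ← hc]
        rw [ENNReal.mul_rpow_of_nonneg _ _ h1s, ENNReal.mul_rpow_of_nonneg _ _ ht',
          ENNReal.mul_rpow_of_nonneg _ _ t0, mul_mul_mul_comm, ← ENNReal.rpow_add _ _ hc0 hct,
          ← ENNReal.rpow_mul, ← ENNReal.rpow_mul]
        rw [sub_add_cancel, ENNReal.rpow_one, mul_comm (1 - t), mul_comm t, ENNReal.rpow_mul, ENNReal.rpow_mul]
    _ ≤ _ := mul_le_mul' (ENNReal.rpow_le_rpow (le_iSup (fun s : Set.Ioo (0:ℝ) 1 => rterm w x0 s y) s) ht')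
        (ENNReal.rpow_le_rpow (le_iSup (fun s : Set.Ioo (0:ℝ) 1 => rterm w x0 s z) s) t0)

lemma renv_pos (hP : Convex ℝ P) {w : Euc n → ℝ≥0∞} 
    (hf : ∀ x ∈ interior P, w x ≠ ⊤) (hp : ∀ x ∈ interior P, w x ≠ 0) {x0 y : Euc n}
    (hx0 : x0 ∈ interior P) (hy : y ∈ P) : 0 < renv w x0 y := by
  have hs : (1/2:ℝ) ∈ Set.Ioo (0:ℝ) 1 := by constructor <;> norm_num
  refine lt_of_lt_of_le ?_ (le_iSup (fun s : Set.Ioo (0:ℝ) 1 => rterm w x0 s y) ⟨1/2, hs⟩)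
  have hm := ray_int hP hx0 hy hs
  exact ENNReal.mul_pos (ENNReal.rpow_pos (pos_iff_ne_zero.2 (hp _ hx0)) (hf _ hx0)).ne'
    (ENNReal.rpow_pos (pos_iff_ne_zero.2 (hp _ hm)) (hf _ hm)).ne'

lemma zero_prop (hP : Convex ℝ P) {w : Euc n → ℝ≥0∞} (hw : LogConvexOn (interior P) w)
    (hf : ∀ x ∈ interior P, w x ≠ ⊤) {z x : Euc n} (hz : z ∈ interior P) (hz0 : w z = 0)
    (hx : x ∈ interior P) : w x = 0 := by
  have hc : Continuous fun e : ℝ => z + (1 + e) • (x - z) := by fun_prop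
  have h1 : ∀ᶠ e in 𝓝 (0:ℝ), z + (1 + e) • (x - z) ∈ interior P := by
    refine hc.continuousAt.eventually_mem ?_
    simpa using isOpen_interior.mem_nhds hx
  obtain ⟨e, he0, he⟩ := ((h1.filter_mono (nhdsWithin_le_nhds (s := Set.Ioi 0))).and self_mem_nhdsWithin).exists
  have he : 0 < e := he
  have h2 := hw hz he0 (t := 1 / (1 + e)) (by positivity) (by rw [div_le_one (by positivity)]; linarith)
  have hne : (1:ℝ) + e ≠ 0 := by positivity
  rw [← ray_eq] at h2
  have e1 : z + (1 / (1 + e)) • (z + (1 + e) • (x - z) - z) = x := by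
    rw [add_sub_cancel_left, smul_smul, one_div, inv_mul_cancel₀ hne, one_smul, add_sub_cancel]
  rw [e1, hz0, ENNReal.zero_rpow_of_pos, zero_mul] at h2
  · exact le_antisymm h2 zero_le
  · rw [sub_pos, div_lt_one (by positivity)]; linarith

end env

section compact
variable {n : ℕ} (S : NSystem n)

lemma trunc_bd {f : ℝ≥0∞} (hf : f ≠ ⊤) (j : ℕ) :
    f ≤ min f (ENNReal.ofReal (Real.exp (j + 1 : ℕ))) + ENNReal.ofReal (xlogx f) / ((j + 1 : ℕ) : ℝ≥0∞) := by
  rcases le_total f (ENNReal.ofReal (Real.exp (j + 1 : ℕ))) with h | h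
  · rw [min_eq_left h]; exact le_self_add
  · refine le_trans ?_ le_add_self
    have hr : Real.exp (j + 1 : ℕ) ≤ f.toReal := (ENNReal.ofReal_le_iff_le_toReal hf).1 h
    have hl : ((j + 1 : ℕ) : ℝ) ≤ Real.log f.toReal :=
      (Real.le_log_iff_exp_le ((Real.exp_pos _).trans_le hr)).2 hr
    rw [ENNReal.le_div_iff_mul_le (by simp) (by simp)]
    calc f * ((j + 1 : ℕ) : ℝ≥0∞) = ENNReal.ofReal (f.toReal * ((j + 1 : ℕ) : ℝ)) := by
          rw [ENNReal.ofReal_mul ENNReal.toReal_nonneg, ENNReal.ofReal_toReal hf, ENNReal.ofReal_natCast]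
      _ ≤ _ := by
          refine ENNReal.ofReal_le_ofReal ?_
          unfold xlogx
          exact mul_le_mul_of_nonneg_left hl ENNReal.toReal_nonneg

lemma mass_lim {f : ℕ → Euc n → ℝ≥0∞} (hf : ∀ k, f k ∈ MExp S 1) {w : Euc n → ℝ≥0∞}
    (hlim : ∀ x ∈ interior S.P, Tendsto (fun k => f k x) atTop (𝓝 (w x)))
    {B : ℝ≥0∞} (hB : B ≠ ⊤) (hent : ∀ k, ∫⁻ x, ENNReal.ofReal (xlogx (f k x)) ∂S.μ ≤ B) :
    ∫⁻ x, w x ∂S.μ = S.μ S.P := by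
  have := mu_fin S
  have hae : ∀ᵐ x ∂S.μ, Tendsto (fun k => f k x) atTop (𝓝 (w x)) := by
    filter_upwards [ae_int S] with x hx using hlim x hx
  have hm : ∀ k, AEMeasurable (f k) S.μ := fun k => aem_mu S (hf k).1
  apply le_antisymm
  · calc ∫⁻ x, w x ∂S.μ = ∫⁻ x, liminf (fun k => f k x) atTop ∂S.μ := by
          refine lintegral_congr_ae ?_
          filter_upwards [hae] with x hx using hx.liminf_eq.symm
      _ ≤ liminf (fun k => ∫⁻ x, f k x ∂S.μ) atTop := lintegral_liminf_le' hm
      _ = S.μ S.P := by simp only [MExp_int S (hf _)]; exact liminf_const _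
  · have key : ∀ j : ℕ, S.μ S.P ≤ ∫⁻ x, w x ∂S.μ + B / ((j + 1 : ℕ) : ℝ≥0∞) := by
      intro j
      set M := ENNReal.ofReal (Real.exp (j + 1 : ℕ)) with hM
      have h1 : ∀ k, S.μ S.P ≤ ∫⁻ x, min (f k x) M ∂S.μ + B / ((j + 1 : ℕ) : ℝ≥0∞) := by
        intro k
        calc S.μ S.P = ∫⁻ x, f k x ∂S.μ := (MExp_int S (hf k)).symm
          _ ≤ ∫⁻ x, (min (f k x) M + ENNReal.ofReal (xlogx (f k x)) / ((j + 1 : ℕ) : ℝ≥0∞)) ∂S.μ := by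
              refine lintegral_mono_ae ?_
              filter_upwards [ae_int S] with x hx
              refine trunc_bd ?_ j
              obtain ⟨A, -, hA⟩ := int_bound S hx
              exact ((hA _ (hf k)).trans_lt ENNReal.ofReal_lt_top).ne
          _ = ∫⁻ x, min (f k x) M ∂S.μ + (∫⁻ x, ENNReal.ofReal (xlogx (f k x)) ∂S.μ) / ((j + 1 : ℕ) : ℝ≥0∞) := by
              rw [lintegral_add_left' ((hm k).min aemeasurable_const)]
              simp_rw [div_eq_mul_inv]
              rw [lintegral_mul_const' _ _ (by simp)]
          _ ≤ _ := by gcongr; exact hent k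
      have h2 : Tendsto (fun k => ∫⁻ x, min (f k x) M ∂S.μ) atTop (𝓝 (∫⁻ x, min (w x) M ∂S.μ)) := by
        refine tendsto_lintegral_of_dominated_convergence' (fun _ => M)
          (fun k => (hm k).min aemeasurable_const) (fun k => Eventually.of_forall fun x => min_le_right _ _) ?_ ?_
        · rw [lintegral_const]
          exact ENNReal.mul_ne_top ENNReal.ofReal_ne_top (measure_ne_top _ _)
        · filter_upwards [hae] with x hx using hx.min tendsto_const_nhds
      have h3 := ge_of_tendsto (h2.add_const (B / ((j + 1 : ℕ) : ℝ≥0∞))) (Eventually.of_forall h1)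
      refine h3.trans ?_
      gcongr
      exact min_le_left _ _
    have h4 : Tendsto (fun j : ℕ => B / (j : ℝ≥0∞)) atTop (𝓝 0) :=
      ENNReal.Tendsto.const_div ENNReal.tendsto_nat_nhds_top (Or.inr hB) |>.trans (by simp)
    have h5 := (h4.comp (tendsto_add_atTop_nat 1)).const_add (∫⁻ x, w x ∂S.μ)
    rw [add_zero] at h5
    exact ge_of_tendsto h5 (Eventually.of_forall key)

lemma MExp_fin {u : Euc n → ℝ≥0∞} (hu : u ∈ MExp S 1) {x : Euc n} (hx : x ∈ interior S.P) : u x ≠ ⊤ := by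
  obtain ⟨A, -, hA⟩ := int_bound S hx
  exact ((hA _ hu).trans_lt ENNReal.ofReal_lt_top).ne

lemma compactness (hn : n ≠ 0) {u : ℕ → Euc n → ℝ≥0∞} (hu : ∀ k, u k ∈ MExp S 1)
    {C : ℝ≥0∞} (hC : C ≠ ⊤) (hb : ∀ k, ∫⁻ y in frontier S.P, u k y ∂S.σ ≤ C) :
    ∃ φ : ℕ → ℕ, StrictMono φ ∧ ∃ w ∈ MExp S 1,
      (∀ x ∈ interior S.P, Tendsto (fun k => u (φ k) x) atTop (𝓝 (w x))) ∧
      ∀ y ∈ S.P, w y ≤ liminf (fun k => u (φ k) y) atTop := by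
  classical
  obtain ⟨K, K2, hK, hK2, hent⟩ := ent_bound S hn
  have hP := P_convex S
  let B : Euc n → ℝ≥0∞ := fun x => if hx : x ∈ interior S.P then ENNReal.ofReal (int_bound S hx).choose else 0
  have hlc : ∀ k, LogConvexOn (interior S.P) (u k) := fun k x hx y hy t h0 h1 =>
    (hu k).2.2.1 (interior_subset hx) (interior_subset hy) h0 h1
  obtain ⟨φ, hφ, w, hw, hwf, hlim⟩ := helly isOpen_interior hP.interior hlc (B := B)
    (fun x hx => by simp only [B, hx, dif_pos]; exact ENNReal.ofReal_ne_top)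
    (fun k x hx => by simp only [B, hx, dif_pos]; exact (int_bound S hx).choose_spec.2 _ (hu k))
  have hmass : ∫⁻ x, w x ∂S.μ = S.μ S.P := by
    refine mass_lim S (fun k => hu (φ k)) hlim (B := K * (C + K2))
      (ENNReal.mul_ne_top hK (ENNReal.add_ne_top.2 ⟨hC, hK2⟩)) fun k => ?_
    refine (hent _ (hu (φ k))).trans ?_
    gcongr
    exact hb _
  have hw0 : ∀ x ∈ interior S.P, w x ≠ 0 := by
    intro z hz h0
    have : ∫⁻ x, w x ∂S.μ = 0 := by
      rw [lintegral_congr_ae (g := fun _ => 0)]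
      · simp
      · filter_upwards [ae_int S] with x hx using zero_prop hP hw hwf hz h0 hx
    exact mu_ne_zero S (hmass ▸ this)
  obtain ⟨x0, hx0⟩ := S.simple.1.2.1
  have heq : ∀ y ∈ interior S.P, renv w x0 y = w y := fun y hy => renv_eq_int hP hw hwf hx0 (hw0 x0 hx0) hy
  refine ⟨φ, hφ, renv w x0, (MExp_iff S).2 ⟨renv_lsc hP hw hwf hx0 (hw0 _ hx0),
    fun y hy => renv_pos hP hwf hw0 hx0 hy, renv_logconv hP hw hwf hx0 (hw0 _ hx0), ?_⟩, ?_, ?_⟩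
  · rw [← hmass]
    refine lintegral_congr_ae ?_
    filter_upwards [ae_int S] with x hx using heq x hx
  · intro x hx; rw [heq x hx]; exact hlim x hx
  · intro y hy
    refine iSup_le fun s => ?_
    have hs := s.2
    have h1s : 0 ≤ 1 / (s:ℝ) := by have := hs.1; positivity
    have hm := ray_int hP hx0 hy hs
    have t1 : Tendsto (fun k => rterm (u (φ k)) x0 s y) atTop (𝓝 (rterm w x0 s y)) := by
      refine ENNReal.Tendsto.mul ((ENNReal.continuous_rpow_const.tendsto _).comp (hlim _ hx0)) (Or.inr ?_)
        ((ENNReal.continuous_rpow_const.tendsto _).comp (hlim _ hm)) (Or.inr ?_)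
      · exact ENNReal.rpow_ne_top_of_nonneg h1s (hwf _ hm)
      · exact ENNReal.rpow_ne_top_of_ne_zero (hw0 _ hx0) (hwf _ hx0)
    rw [← t1.liminf_eq]
    refine liminf_le_liminf (Eventually.of_forall fun k => ?_)
    exact rterm_le (hu (φ k)).2.2.1 (interior_subset hx0) hy
      ((hu (φ k)).2.1 _ (interior_subset hx0)).ne' (MExp_fin S (hu _) hx0) hs

end compact

section mixs
variable {n : ℕ} (S : NSystem n)

lemma holder2 (X1 Y1 X2 Y2 : ℝ≥0∞) {r : ℝ} (h0 : 0 ≤ r) (h1 : r ≤ 1) :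
    X1 ^ (1 - r) * Y1 ^ r + X2 ^ (1 - r) * Y2 ^ r ≤ (X1 + X2) ^ (1 - r) * (Y1 + Y2) ^ r := by
  rcases h0.eq_or_lt with rfl | h0
  · simp
  rcases h1.eq_or_lt with rfl | h1
  · simp
  have h1r : 0 < 1 - r := by linarith
  have hpq : (1 / (1 - r)).HolderConjugate (1 / r) := by
    rw [Real.holderConjugate_iff]
    refine ⟨by rw [lt_div_iff₀ h1r]; linarith, by field_simp; ring⟩
  have := ENNReal.inner_le_Lp_mul_Lq Finset.univ ![X1 ^ (1 - r), X2 ^ (1 - r)] ![Y1 ^ r, Y2 ^ r] hpq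
  simpa [Fin.sum_univ_two, ← ENNReal.rpow_mul, h1r.ne', h0.ne'] using this

/-- mixture -/
def mix (t : ℝ) (u v : Euc n → ℝ≥0∞) : Euc n → ℝ≥0∞ :=
  fun x => ENNReal.ofReal (1 - t) * u x + ENNReal.ofReal t * v x

lemma lsc_cmul {P : Set (Euc n)} {u : Euc n → ℝ≥0∞} (hu : LowerSemicontinuousOn u P) (a : ℝ) :
    LowerSemicontinuousOn (fun x => ENNReal.ofReal a * u x) P := by
  refine (ENNReal.continuous_const_mul ENNReal.ofReal_ne_top).comp_lowerSemicontinuousOn hu ?_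
  intro x y h
  exact mul_le_mul_right h _

lemma coef_split (a : ℝ) (X Y : ℝ≥0∞) {r : ℝ} (h0 : 0 ≤ r) (h1 : r ≤ 1) :
    ENNReal.ofReal a * (X ^ (1 - r) * Y ^ r) = (ENNReal.ofReal a * X) ^ (1 - r) * (ENNReal.ofReal a * Y) ^ r := by
  have h1r : 0 ≤ 1 - r := by linarith
  rw [ENNReal.mul_rpow_of_nonneg _ _ h1r, ENNReal.mul_rpow_of_nonneg _ _ h0, mul_mul_mul_comm,
    ← ENNReal.rpow_add_of_nonneg _ _ h1r h0]
  simp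

lemma mix_mem {u v : Euc n → ℝ≥0∞} (hu : u ∈ MExp S 1) (hv : v ∈ MExp S 1) {t : ℝ} (h0 : 0 ≤ t) (h1 : t ≤ 1) :
    mix t u v ∈ MExp S 1 := by
  refine (MExp_iff S).2 ⟨(lsc_cmul hu.1 _).add (lsc_cmul hv.1 _), fun x hx => ?_, ?_, ?_⟩
  · have a1 := hu.2.1 x hx
    have a2 := hv.2.1 x hx
    unfold mix
    rcases h0.eq_or_lt with rfl | h0
    · simpa using a1
    · refine lt_of_lt_of_le ?_ le_add_self
      exact ENNReal.mul_pos (by simpa using h0) a2.ne'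
  · intro x hx y hy r r0 r1
    have b1 := hu.2.2.1 hx hy r0 r1
    have b2 := hv.2.2.1 hx hy r0 r1
    unfold mix
    refine (add_le_add (mul_le_mul_right b1 _) (mul_le_mul_right b2 _)).trans ?_
    rw [coef_split _ _ _ r0 r1, coef_split _ _ _ r0 r1]
    exact holder2 _ _ _ _ r0 r1
  · unfold mix
    rw [lintegral_add_left' ((aem_mu S hu.1).const_mul _), lintegral_const_mul' _ _ ENNReal.ofReal_ne_top,
      lintegral_const_mul' _ _ ENNReal.ofReal_ne_top, MExp_int S hu, MExp_int S hv, ← add_mul,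
      ← ENNReal.ofReal_add (by linarith) h0]
    simp

lemma one_mem : (fun _ => 1 : Euc n → ℝ≥0∞) ∈ MExp S 1 := by
  refine (MExp_iff S).2 ⟨lowerSemicontinuousOn_const, fun _ _ => one_pos, fun x _ y _ t _ _ => by simp, ?_⟩
  simp [mu_univ]

/-- boundary integral -/
def Jb (u : Euc n → ℝ≥0∞) : ℝ≥0∞ := ∫⁻ y in frontier S.P, u y ∂S.σ

lemma Jb_mix {u v : Euc n → ℝ≥0∞} (hu : u ∈ MExp S 1) (t : ℝ) :
    Jb S (mix t u v) = ENNReal.ofReal (1 - t) * Jb S u + ENNReal.ofReal t * Jb S v := by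
  unfold Jb mix
  rw [lintegral_add_left' ((aem_sigma S hu.1).const_mul _), lintegral_const_mul' _ _ ENNReal.ofReal_ne_top,
      lintegral_const_mul' _ _ ENNReal.ofReal_ne_top]

/-- shifted entropy integrand -/
def gE (y : ℝ≥0∞) : ℝ≥0∞ := ENNReal.ofReal (xlogx y + 1)

/-- shifted entropy -/
def Es (u : Euc n → ℝ≥0∞) : ℝ≥0∞ := ∫⁻ x, gE (u x) ∂S.μ

lemma gE_meas : Measurable gE := (xlogx_meas.add_const 1).ennreal_ofReal

lemma xlogx_ge (y : ℝ≥0∞) : y.toReal ≤ xlogx y + 1 := by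
  unfold xlogx
  rcases (ENNReal.toReal_nonneg (a := y)).eq_or_lt with h | h
  · rw [← h]; simp
  · have := Real.one_sub_inv_le_log_of_pos h
    have h2 := mul_le_mul_of_nonneg_left this h.le
    rw [mul_sub, mul_inv_cancel₀ h.ne'] at h2
    linarith

lemma xlogx_ge' (y : ℝ≥0∞) : 0 ≤ xlogx y + 1 := ENNReal.toReal_nonneg.trans (xlogx_ge y)

lemma Es_one : Es S (fun _ => 1) = S.μ S.P := by
  simp [Es, gE, xlogx, mu_univ]

lemma le_Es {u : Euc n → ℝ≥0∞} (hu : u ∈ MExp S 1) : S.μ S.P ≤ Es S u := by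
  rw [← MExp_int S hu]
  refine lintegral_mono_ae ?_
  filter_upwards [ae_int S] with x hx
  rw [← ENNReal.ofReal_toReal (MExp_fin S hu hx)]
  refine ENNReal.ofReal_le_ofReal ?_
  rw [ENNReal.ofReal_toReal (MExp_fin S hu hx)]
  exact xlogx_ge _

lemma mix_toReal {a b : ℝ≥0∞} (ha : a ≠ ⊤) (hb : b ≠ ⊤) {t : ℝ} (h0 : 0 ≤ t) (h1 : t ≤ 1) :
    (ENNReal.ofReal (1 - t) * a + ENNReal.ofReal t * b).toReal = (1 - t) * a.toReal + t * b.toReal := by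
  rw [ENNReal.toReal_add (ENNReal.mul_ne_top ENNReal.ofReal_ne_top ha) (ENNReal.mul_ne_top ENNReal.ofReal_ne_top hb),
    ENNReal.toReal_mul, ENNReal.toReal_mul, ENNReal.toReal_ofReal (by linarith), ENNReal.toReal_ofReal h0]

lemma xlogx_mix {a b : ℝ≥0∞} (ha : a ≠ ⊤) (hb : b ≠ ⊤) {t : ℝ} (h0 : 0 ≤ t) (h1 : t ≤ 1) :
    xlogx (ENNReal.ofReal (1 - t) * a + ENNReal.ofReal t * b) ≤ (1 - t) * xlogx a + t * xlogx b := by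
  unfold xlogx
  rw [mix_toReal ha hb h0 h1]
  exact Real.convexOn_mul_log.2 (ENNReal.toReal_nonneg (a := a)) (ENNReal.toReal_nonneg (a := b))
    (by linarith : 0 ≤ 1 - t) h0 (by ring)

lemma gE_comb {a b : ℝ≥0∞} {t : ℝ} (h0 : 0 ≤ t) (h1 : t ≤ 1) :
    ENNReal.ofReal (1 - t) * gE a + ENNReal.ofReal t * gE b
      = ENNReal.ofReal ((1 - t) * xlogx a + t * xlogx b + 1) := by
  unfold gE
  have e1 := xlogx_ge' a
  have e2 := xlogx_ge' b
  have h1' : 0 ≤ 1 - t := by linarith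
  rw [← ENNReal.ofReal_mul h1', ← ENNReal.ofReal_mul h0, ← ENNReal.ofReal_add (by positivity) (by positivity)]
  congr 1; ring

lemma gE_mix {a b : ℝ≥0∞} (ha : a ≠ ⊤) (hb : b ≠ ⊤) {t : ℝ} (h0 : 0 ≤ t) (h1 : t ≤ 1) :
    gE (ENNReal.ofReal (1 - t) * a + ENNReal.ofReal t * b)
      ≤ ENNReal.ofReal (1 - t) * gE a + ENNReal.ofReal t * gE b := by
  rw [gE_comb h0 h1]
  refine ENNReal.ofReal_le_ofReal ?_
  have := xlogx_mix ha hb h0 h1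
  linarith

lemma gE_strict {a b : ℝ≥0∞} (ha : a ≠ ⊤) (hb : b ≠ ⊤)
    (h : gE (ENNReal.ofReal (1 - 1/2) * a + ENNReal.ofReal (1/2) * b)
      = ENNReal.ofReal (1 - 1/2) * gE a + ENNReal.ofReal (1/2) * gE b) : a = b := by
  by_contra hne
  have hne' : a.toReal ≠ b.toReal := fun e => hne ((ENNReal.toReal_eq_toReal_iff' ha hb).1 e)
  have hs := Real.strictConvexOn_mul_log.2 (ENNReal.toReal_nonneg (a := a)) (ENNReal.toReal_nonneg (a := b))
    hne' (by norm_num : (0:ℝ) < 1 - 1/2) (by norm_num : (0:ℝ) < 1/2) (by norm_num)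
  rw [gE_comb (by norm_num) (by norm_num)] at h
  have h2 := (ENNReal.ofReal_eq_ofReal_iff (xlogx_ge' _) (by
    have := xlogx_ge' a
    have := xlogx_ge' b
    linarith)).1 h
  have h3 : xlogx (ENNReal.ofReal (1 - 1/2) * a + ENNReal.ofReal (1/2) * b)
      < (1 - 1/2) * xlogx a + (1/2) * xlogx b := by
    unfold xlogx
    rw [mix_toReal ha hb (by norm_num) (by norm_num)]
    exact hs
  linarith

lemma gE_aem {u : Euc n → ℝ≥0∞} (hu : u ∈ MExp S 1) : AEMeasurable (fun x => gE (u x)) S.μ :=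
  gE_meas.comp_aemeasurable (aem_mu S hu.1)

lemma Es_comb {u v : Euc n → ℝ≥0∞} (hu : u ∈ MExp S 1) (t : ℝ) :
    ∫⁻ x, (ENNReal.ofReal (1 - t) * gE (u x) + ENNReal.ofReal t * gE (v x)) ∂S.μ
     = ENNReal.ofReal (1 - t) * Es S u + ENNReal.ofReal t * Es S v := by
  rw [lintegral_add_left' ((gE_aem S hu).const_mul _), lintegral_const_mul' _ _ ENNReal.ofReal_ne_top,
      lintegral_const_mul' _ _ ENNReal.ofReal_ne_top]
  rfl

lemma gE_mix_ae {u v : Euc n → ℝ≥0∞} (hu : u ∈ MExp S 1) (hv : v ∈ MExp S 1) {t : ℝ} (h0 : 0 ≤ t) (h1 : t ≤ 1) :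
    (fun x => gE (mix t u v x)) ≤ᵐ[S.μ] fun x => ENNReal.ofReal (1 - t) * gE (u x) + ENNReal.ofReal t * gE (v x) := by
  filter_upwards [ae_int S] with x hx
  exact gE_mix (MExp_fin S hu hx) (MExp_fin S hv hx) h0 h1

lemma coef_one {t : ℝ} (h0 : 0 ≤ t) (h1 : t ≤ 1) (e : ℝ≥0∞) :
    ENNReal.ofReal (1 - t) * e + ENNReal.ofReal t * e = e := by
  rw [← add_mul, ← ENNReal.ofReal_add (by linarith) h0]; simp

lemma level {u : Euc n → ℝ≥0∞} (hu : u ∈ MExp S 1) {c : ℝ≥0∞} (h1 : Jb S u ≤ c)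
    (h2 : c ≤ Jb S (fun _ => 1)) (h3 : Jb S (fun _ => 1) ≠ ⊤) :
    ∃ v ∈ MExp S 1, Jb S v = c ∧ Es S v ≤ Es S u := by
  have hut : Jb S u ≠ ⊤ := ((h1.trans h2).trans_lt h3.lt_top).ne
  let f : ℝ → ℝ≥0∞ := fun t => ENNReal.ofReal (1 - t) * Jb S u + ENNReal.ofReal t * Jb S (fun _ => 1)
  have hf : Continuous f := by
    refine Continuous.add ?_ ?_
    · exact (ENNReal.continuous_mul_const hut).comp (ENNReal.continuous_ofReal.comp (by fun_prop))
    · exact (ENNReal.continuous_mul_const h3).comp ENNReal.continuous_ofReal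
  obtain ⟨t, ht, hft⟩ := intermediate_value_Icc (zero_le_one' ℝ) hf.continuousOn
    (show c ∈ Set.Icc (f 0) (f 1) by simp only [f]; constructor <;> simpa)
  refine ⟨mix t u (fun _ => 1), mix_mem S hu (one_mem S) ht.1 ht.2, ?_, ?_⟩
  · rw [Jb_mix S hu]; exact hft
  · refine (lintegral_mono_ae (gE_mix_ae S hu (one_mem S) ht.1 ht.2)).trans ?_
    rw [Es_comb S hu, Es_one]
    refine le_trans ?_ (coef_one ht.1 ht.2 (Es S u)).le
    gcongr
    exact le_Es S hu

lemma Es_fin (hn : n ≠ 0) {u : Euc n → ℝ≥0∞} (hu : u ∈ MExp S 1) (hj : Jb S u ≠ ⊤) : Es S u ≠ ⊤ := by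
  obtain ⟨K, K2, hK, hK2, h⟩ := ent_bound S hn
  have h1 : Es S u ≤ (∫⁻ x, ENNReal.ofReal (xlogx (u x)) ∂S.μ) + S.μ S.P := by
    calc Es S u ≤ ∫⁻ x, (ENNReal.ofReal (xlogx (u x)) + 1) ∂S.μ := by
          refine lintegral_mono fun x => ?_
          unfold gE
          refine ENNReal.ofReal_add_le.trans (by simp)
      _ = _ := by rw [lintegral_add_right _ measurable_const]; simp [mu_univ]
  refine (h1.trans_lt (ENNReal.add_lt_top.2 ⟨(h u hu).trans_lt ?_, (mu_ne_top S).lt_top⟩)).ne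
  exact ENNReal.mul_lt_top hK.lt_top (ENNReal.add_lt_top.2 ⟨hj.lt_top, hK2.lt_top⟩)

lemma Spf_eq {u : Euc n → ℝ≥0∞} (hu : u ∈ MExp S 1) (hE : Es S u ≠ ⊤) :
    Spf S u = (((S.μ S.P).toReal⁻¹ * ((S.μ S.P).toReal - (Es S u).toReal) : ℝ) : EReal) := by
  have hx : AEMeasurable (fun x => xlogx (u x)) S.μ := xlogx_meas.comp_aemeasurable (aem_mu S hu.1)
  have h1 : Es S u + ∫⁻ x, ENNReal.ofReal (-(xlogx (u x))) ∂S.μ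
      = (∫⁻ x, ENNReal.ofReal (xlogx (u x)) ∂S.μ) + S.μ S.P := by
    have e : (∫⁻ x, ENNReal.ofReal (xlogx (u x)) ∂S.μ) + S.μ S.P
        = ∫⁻ x, (ENNReal.ofReal (xlogx (u x)) + 1) ∂S.μ := by
      rw [lintegral_add_right _ measurable_const]; simp [mu_univ]
    rw [e, Es, ← lintegral_add_left' (gE_aem S hu)]
    refine lintegral_congr fun x => ?_
    unfold gE
    have := xlogx_ge' (u x)
    rcases le_total 0 (xlogx (u x)) with h | h
    · rw [ENNReal.ofReal_of_nonpos (by linarith : -xlogx (u x) ≤ 0), add_zero,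
        ENNReal.ofReal_add h zero_le_one, ENNReal.ofReal_one]
    · rw [ENNReal.ofReal_of_nonpos h, zero_add, ← ENNReal.ofReal_add this (by linarith)]
      simp
  set a := ∫⁻ x, ENNReal.ofReal (-(xlogx (u x))) ∂S.μ with ha
  set b := ∫⁻ x, ENNReal.ofReal (xlogx (u x)) ∂S.μ with hb
  have hat : a ≠ ⊤ := by
    refine (lt_of_le_of_lt ?_ (mu_ne_top S).lt_top).ne
    calc a ≤ ∫⁻ x, 1 ∂S.μ := by
          refine lintegral_mono fun x => ?_
          rw [← ENNReal.ofReal_one]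
          refine ENNReal.ofReal_le_ofReal ?_
          have := xlogx_ge' (u x)
          linarith
      _ = _ := by simp [mu_univ]
  have hbt : b ≠ ⊤ := by
    intro h
    rw [h, top_add] at h1
    exact (ENNReal.add_ne_top.2 ⟨hE, hat⟩) h1
  have h2 := congrArg ENNReal.toReal h1
  rw [ENNReal.toReal_add hE hat, ENNReal.toReal_add hbt (mu_ne_top S)] at h2
  unfold Spf
  rw [mu_restrict, ← ha, ← hb, ← EReal.coe_ennreal_toReal hat, ← EReal.coe_ennreal_toReal hbt,
    ← EReal.coe_sub, ← EReal.coe_mul]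
  congr 2
  linarith

lemma Spf_le {u v : Euc n → ℝ≥0∞} (hu : u ∈ MExp S 1) (hE : Es S u ≠ ⊤) (hv : v ∈ MExp S 1) (hE' : Es S v ≠ ⊤) :
    Spf S u ≤ Spf S v ↔ Es S v ≤ Es S u := by
  rw [Spf_eq S hu hE, Spf_eq S hv hE', EReal.coe_le_coe_iff]
  have : 0 < (S.μ S.P).toReal⁻¹ := inv_pos.2 (ENNReal.toReal_pos (mu_ne_zero S) (mu_ne_top S))
  rw [mul_le_mul_iff_right₀ this, ← ENNReal.toReal_le_toReal hE' hE]
  constructor <;> intro h <;> linarith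

lemma inf_seq {α : Type*} {A : Set α} (hA : A.Nonempty) (F : α → ℝ≥0∞) :
    ∃ u : ℕ → α, (∀ k, u k ∈ A) ∧ ∃ m, Tendsto (fun k => F (u k)) atTop (𝓝 m) ∧ ∀ a ∈ A, m ≤ F a := by
  obtain ⟨s, -, hs, hm⟩ := exists_seq_tendsto_sInf (hA.image F) (OrderBot.bddBelow _)
  choose u hu hus using hm
  refine ⟨u, hu, sInf (F '' A), ?_, fun a ha => sInf_le ⟨a, ha, rfl⟩⟩
  simpa only [hus] using hs

lemma J_fatou {u : ℕ → Euc n → ℝ≥0∞} (hu : ∀ k, u k ∈ MExp S 1) {w : Euc n → ℝ≥0∞}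
    (h : ∀ y ∈ S.P, w y ≤ liminf (fun k => u k y) atTop) :
    Jb S w ≤ liminf (fun k => Jb S (u k)) atTop := by
  calc Jb S w ≤ ∫⁻ y in frontier S.P, liminf (fun k => u k y) atTop ∂S.σ :=
        setLIntegral_mono' isClosed_frontier.measurableSet fun y hy => h y ((P_closed S).frontier_subset hy)
    _ ≤ _ := lintegral_liminf_le' fun k => aem_sigma S (hu k).1

lemma gE_tendsto {f : ℕ → ℝ≥0∞} {a : ℝ≥0∞} (ha : a ≠ ⊤) (h : Tendsto f atTop (𝓝 a)) :
    Tendsto (fun k => gE (f k)) atTop (𝓝 (gE a)) := by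
  have h1 := (ENNReal.tendsto_toReal ha).comp h
  have h2 := (Real.continuous_mul_log.tendsto _).comp h1
  exact (ENNReal.continuous_ofReal.tendsto _).comp (h2.add_const 1)

lemma E_fatou {u : ℕ → Euc n → ℝ≥0∞} (hu : ∀ k, u k ∈ MExp S 1) {w : Euc n → ℝ≥0∞} (hw : w ∈ MExp S 1)
    (h : ∀ x ∈ interior S.P, Tendsto (fun k => u k x) atTop (𝓝 (w x))) :
    Es S w ≤ liminf (fun k => Es S (u k)) atTop := by
  calc Es S w = ∫⁻ x, liminf (fun k => gE (u k x)) atTop ∂S.μ := by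
        refine lintegral_congr_ae ?_
        filter_upwards [ae_int S] with x hx
        exact (gE_tendsto (MExp_fin S hw hx) (h x hx)).liminf_eq.symm
    _ ≤ _ := lintegral_liminf_le' fun k => gE_aem S (hu k)

lemma J_one_fin (hn : n ≠ 0) : Jb S (fun _ => 1) ≠ ⊤ := by
  obtain ⟨x0, hx0⟩ := S.simple.1.2.1
  have := (geom S hn hx0).1
  unfold Jb
  simpa using this.ne

lemma J_min (hn : n ≠ 0) : ∃ w ∈ MExp S 1, ∀ u ∈ MExp S 1, Jb S w ≤ Jb S u := by
  have hne : {u | u ∈ MExp S 1 ∧ Jb S u ≤ Jb S (fun _ => 1)}.Nonempty := ⟨fun _ => 1, one_mem S, le_rfl⟩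
  obtain ⟨u, hu, m, hm, hle⟩ := inf_seq hne (Jb S)
  obtain ⟨φ, hφ, w, hw, -, hlim⟩ := compactness S hn (fun k => (hu k).1) (J_one_fin S hn) (fun k => (hu k).2)
  refine ⟨w, hw, fun v hv => ?_⟩
  have h1 : Jb S w ≤ m := by
    have := J_fatou S (fun k => (hu (φ k)).1) hlim
    exact this.trans (hm.comp hφ.tendsto_atTop).liminf_eq.le
  rcases le_total (Jb S v) (Jb S (fun _ => 1)) with h | h
  · exact h1.trans (hle v ⟨hv, h⟩)
  · exact (h1.trans (hle _ ⟨one_mem S, le_rfl⟩)).trans h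

lemma E_min (hn : n ≠ 0) {c : ℝ≥0∞} {u0 : Euc n → ℝ≥0∞} (hu0 : u0 ∈ MExp S 1) (h0 : Jb S u0 ≤ c)
    (h1 : c ≤ Jb S (fun _ => 1)) :
    ∃ v ∈ MExp S 1, Jb S v = c ∧ ∀ u ∈ MExp S 1, Jb S u = c → Es S v ≤ Es S u := by
  have hct : c ≠ ⊤ := (h1.trans_lt (J_one_fin S hn).lt_top).ne
  obtain ⟨v0, hv0, hv0c, -⟩ := level S hu0 h0 h1 (J_one_fin S hn)
  have hne : {u | u ∈ MExp S 1 ∧ Jb S u = c}.Nonempty := ⟨v0, hv0, hv0c⟩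
  obtain ⟨u, hu, m, hm, hle⟩ := inf_seq hne (Es S)
  obtain ⟨φ, hφ, w, hw, hint, hlim⟩ := compactness S hn (fun k => (hu k).1) hct (fun k => (hu k).2.le)
  have hJ : Jb S w ≤ c := by
    have := J_fatou S (fun k => (hu (φ k)).1) hlim
    simp only [(hu _).2] at this
    rwa [liminf_const] at this
  have hE : Es S w ≤ m := by
    have := E_fatou S (fun k => (hu (φ k)).1) hw hint
    exact this.trans (hm.comp hφ.tendsto_atTop).liminf_eq.le
  obtain ⟨v, hv, hvc, hvE⟩ := level S hw hJ h1 (J_one_fin S hn)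
  exact ⟨v, hv, hvc, fun u hu huc => (hvE.trans hE).trans (hle u ⟨hu, huc⟩)⟩

lemma eq_of_ae {u v : Euc n → ℝ≥0∞} (hu : u ∈ MExp S 1) (hv : v ∈ MExp S 1) (h : ∀ᵐ x ∂S.μ, u x = v x) :
    Set.EqOn u v S.P := by
  have hP := P_convex S
  have hc : ∀ {u : Euc n → ℝ≥0∞}, u ∈ MExp S 1 → ContinuousOn u (interior S.P) := fun {u} hu =>
    cont_of_logconv isOpen_interior hP.interior
      (fun x hx y hy t h0 h1 => hu.2.2.1 (interior_subset hx) (interior_subset hy) h0 h1)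
      (fun x hx => MExp_fin S hu hx)
  have hint : ∀ x ∈ interior S.P, u x = v x := by
    intro x hx
    by_contra hne
    have hO : IsOpen (interior S.P ∩ (fun x => (u x, v x)) ⁻¹' {p | p.1 ≠ p.2}) :=
      ((hc hu).prodMk (hc hv)).isOpen_inter_preimage isOpen_interior
        (isOpen_ne_fun continuous_fst continuous_snd)
    refine mu_open_pos S hO ⟨x, hx, hne⟩ (Set.inter_subset_left.trans interior_subset) ?_
    refine measure_mono_null ?_ (ae_iff.1 h)
    exact fun z hz => hz.2
  obtain ⟨x0, hx0⟩ := S.simple.1.2.1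
  intro y hy
  rw [← renv_eq hP hu.2.2.1 hu.1 hx0 (hu.2.1 _ (interior_subset hx0)).ne' (MExp_fin S hu hx0) hy,
    ← renv_eq hP hv.2.2.1 hv.1 hx0 (hv.2.1 _ (interior_subset hx0)).ne' (MExp_fin S hv hx0) hy]
  unfold renv
  refine iSup_congr fun s => ?_
  unfold rterm
  rw [hint _ hx0, hint _ (ray_int hP hx0 hy s.2)]

lemma E_unique {c : ℝ≥0∞} {u v : Euc n → ℝ≥0∞} (hu : u ∈ MExp S 1) (hv : v ∈ MExp S 1)
    (huc : Jb S u = c) (hvc : Jb S v = c) (hE : Es S u = Es S v) (hEt : Es S u ≠ ⊤)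
    (hmin : ∀ w ∈ MExp S 1, Jb S w = c → Es S u ≤ Es S w) : Set.EqOn u v S.P := by
  refine eq_of_ae S hu hv ?_
  have t0 : (0:ℝ) ≤ 1/2 := by norm_num
  have t1 : (1/2:ℝ) ≤ 1 := by norm_num
  have hm := mix_mem S hu hv t0 t1
  have hmc : Jb S (mix (1/2) u v) = c := by rw [Jb_mix S hu, huc, hvc, coef_one t0 t1]
  have hle := hmin _ hm hmc
  have hae := gE_mix_ae S hu hv t0 t1
  have hcomb := Es_comb S hu (v := v) (1/2)
  rw [← hE, coef_one t0 t1] at hcomb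
  have hfin : ∫⁻ x, gE (mix (1/2) u v x) ∂S.μ ≠ ⊤ :=
    ((lintegral_mono_ae hae).trans_lt (by rw [hcomb]; exact hEt.lt_top)).ne
  have := ae_eq_of_ae_le_of_lintegral_le hae hfin
    (((gE_aem S hu).const_mul _).add ((gE_aem S hv).const_mul _)) (by rw [hcomb]; exact hle)
  filter_upwards [this, ae_int S] with x hx hxi
  exact gE_strict (MExp_fin S hu hxi) (MExp_fin S hv hxi) hx

lemma Upf_Jb (u : Euc n → ℝ≥0∞) : Upf S u = (S.μ S.P)⁻¹ * Jb S u := rfl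

lemma Upf_le {u v : Euc n → ℝ≥0∞} : Upf S u ≤ Upf S v ↔ Jb S u ≤ Jb S v := by
  rw [Upf_Jb, Upf_Jb]
  exact ENNReal.mul_le_mul_iff_right (by simpa using mu_ne_top S) (by simpa using mu_ne_zero S)

lemma Upf_eq {u : Euc n → ℝ≥0∞} {U : ℝ≥0∞} : Upf S u = U ↔ Jb S u = S.μ S.P * U := by
  rw [Upf_Jb]
  constructor
  · rintro rfl
    rw [← mul_assoc, ENNReal.mul_inv_cancel (mu_ne_zero S) (mu_ne_top S), one_mul]
  · intro h
    rw [h, ← mul_assoc, ENNReal.inv_mul_cancel (mu_ne_zero S) (mu_ne_top S), one_mul]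

lemma zero_dim (S : NSystem 0) {u : Euc 0 → ℝ≥0∞} (hu : u ∈ MExp S 1) : u = fun _ => 1 := by
  have h := MExp_int S hu
  have e : u = fun _ => u 0 := by funext x; rw [Subsingleton.elim x 0]
  rw [e, lintegral_const, mu_univ] at h
  have h1 : u 0 = 1 := by
    have := (ENNReal.mul_eq_right (mu_ne_zero S) (mu_ne_top S)).1 h
    exact this
  rw [e, h1]

end mixs

/-- Existence and uniqueness of equilibria: the minimum of `U_𝒫` on
`ℳ^{exp,1}(P)` is attained, and for every internal μ-energy
`U ∈ 𝔘_𝒫 = [min U_𝒫, U_𝒫(1_P)]` there is a unique `u ∈ ℳ^{exp,1}(P)` with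
`U_𝒫(u) = U` maximizing the entropy `S_𝒫` on the level set `{U_𝒫 = U}`. -/
theorem equilibrium_exists_unique (n : ℕ) (S : NSystem n) :
    (∃ umin ∈ MExp S 1, ∀ u' ∈ MExp S 1, Upf S umin ≤ Upf S u') ∧
    ∀ umin ∈ MExp S 1, (∀ u' ∈ MExp S 1, Upf S umin ≤ Upf S u') →
      ∀ U : ℝ≥0∞, U ∈ Set.Icc (Upf S umin) (Upf S (fun _ => 1)) →
        ∃ u, (u ∈ MExp S 1 ∧ Upf S u = U ∧
            Spf S u = sSup {s : EReal | ∃ u' ∈ MExp S 1, Upf S u' = U ∧ Spf S u' = s}) ∧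
          ∀ v, (v ∈ MExp S 1 ∧ Upf S v = U ∧
              Spf S v = sSup {s : EReal | ∃ u' ∈ MExp S 1, Upf S u' = U ∧ Spf S u' = s}) →
            Set.EqOn v u S.P := by
  rcases Nat.eq_zero_or_pos n with rfl | hn
  · refine ⟨⟨fun _ => 1, one_mem S, fun u' hu' => by rw [zero_dim S hu']⟩, ?_⟩
    intro umin humin _ U hU
    have e := zero_dim S humin
    subst e
    have hU' : Upf S (fun _ => 1) = U := le_antisymm hU.1 hU.2
    refine ⟨fun _ => 1, ⟨humin, hU', ?_⟩, ?_⟩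
    · symm
      refine IsGreatest.csSup_eq ⟨⟨_, humin, hU', rfl⟩, ?_⟩
      rintro s ⟨u', hu', -, rfl⟩
      rw [zero_dim S hu']
    · rintro v ⟨hv, -⟩
      rw [zero_dim S hv]
      exact fun x _ => rfl
  have hn : n ≠ 0 := hn.ne'
  refine ⟨?_, ?_⟩
  · obtain ⟨w, hw, hmin⟩ := J_min S hn
    exact ⟨w, hw, fun u hu => (Upf_le S).2 (hmin u hu)⟩
  intro umin humin hmin U hU
  set c := S.μ S.P * U with hc
  have hcU : ∀ u, Upf S u = (S.μ S.P)⁻¹ * Jb S u := fun u => rfl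
  have hm : ∀ u : Euc n → ℝ≥0∞, S.μ S.P * Upf S u = Jb S u := fun u => ((Upf_eq S).1 rfl).symm
  have h0 : Jb S umin ≤ c := by rw [← hm, hc]; exact mul_le_mul_right hU.1 _
  have h1 : c ≤ Jb S (fun _ => 1) := by rw [← hm, hc]; exact mul_le_mul_right hU.2 _
  have hct : c ≠ ⊤ := (h1.trans_lt (J_one_fin S hn).lt_top).ne
  obtain ⟨v, hv, hvc, hvmin⟩ := E_min S hn humin h0 h1
  have hfin : ∀ u ∈ MExp S 1, Jb S u = c → Es S u ≠ ⊤ := fun u hu h => Es_fin S hn hu (by rw [h]; exact hct)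
  have hsup : sSup {s : EReal | ∃ u' ∈ MExp S 1, Upf S u' = U ∧ Spf S u' = s} = Spf S v := by
    refine IsGreatest.csSup_eq ⟨⟨v, hv, (Upf_eq S).2 hvc, rfl⟩, ?_⟩
    rintro s ⟨u', hu', hu'U, rfl⟩
    have hj := (Upf_eq S).1 hu'U
    exact (Spf_le S hu' (hfin _ hu' hj) hv (hfin _ hv hvc)).2 (hvmin u' hu' hj)
  refine ⟨v, ⟨hv, (Upf_eq S).2 hvc, hsup.symm⟩, ?_⟩
  rintro w ⟨hw, hwU, hwS⟩
  have hwc := (Upf_eq S).1 hwU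
  rw [hsup] at hwS
  have hE1 := (Spf_le S hv (hfin _ hv hvc) hw (hfin _ hw hwc)).1 hwS.ge
  exact (E_unique S hv hw hvc hwc (le_antisymm (hvmin w hw hwc) hE1) (hfin _ hv hvc) hvmin).symm

end
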